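/- Let n ≥ 3, let μ be a left SL(n,ℝ)-invariant Borel probability measure on the quotient X_n = SL(n,ℝ)/SL(n,ℤ), let A ⊆ ℝ^n be a Lebesgue-measurable set with 0 < |A| < ∞, and let M > 0. Then μ({Λ ∈ X_n : |N₀(Λ, A) − |A|| > M·|A|^{1/2}}) ≤ C_n · M^{-2}, where C_n = 8ζ(n−1)/ζ(n) and ζ is the Riemann zeta function. -/

import Mathlib

open MeasureTheory Matrix

/-- `SL(n, ℝ)`. -/
abbrev SLR (n : ℕ) := Matrix.SpecialLinearGroup (Fin n) ℝ

instance (n : ℕ) : TopologicalSpace (SLR n) :=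
  TopologicalSpace.induced (fun g : SLR n => (g : Matrix (Fin n) (Fin n) ℝ)) inferInstance

noncomputable instance (n : ℕ) : MeasurableSpace (SLR n) := borel _

/-- `SL(n, ℤ)`, viewed as a subgroup of `SL(n, ℝ)` via the entrywise coercion `ℤ → ℝ`. -/
def SLZ (n : ℕ) : Subgroup (SLR n) :=
  (Matrix.SpecialLinearGroup.map (n := Fin n) (Int.castRingHom ℝ)).range

/-- The space `X_n = SL(n,ℝ)/SL(n,ℤ)` of unimodular lattices in `ℝ^n`:
the coset of `g` corresponds to the lattice `gℤ^n`. -/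
abbrev Xn (n : ℕ) := SLR n ⧸ SLZ n

/-- The set of nonzero integer vectors `x` with `gx ∈ A`; since `x ↦ gx` is a bijection from
`ℤ^n` onto the lattice `gℤ^n`, this set is in bijection with `(gℤ^n \ {0}) ∩ A`, so its
cardinality is `N₀(gℤ^n, A)`. -/
def nonzeroLatticePts {n : ℕ} (g : SLR n) (A : Set (Fin n → ℝ)) : Set (Fin n → ℤ) :=
  {x : Fin n → ℤ | x ≠ 0 ∧ (g : Matrix (Fin n) (Fin n) ℝ).mulVec (fun i => (x i : ℝ)) ∈ A}

/-- The Riemann zeta value `ζ(m) = ∑_{k ≥ 1} k^{-m}` for a natural number `m`. -/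
noncomputable def zetaNat (m : ℕ) : ℝ := ∑' k : ℕ, (((k : ℝ) + 1) ^ m)⁻¹

open scoped ENNReal NNReal Pointwise
open Filter Topology

namespace SLR
variable {n : ℕ}

instance : IsTopologicalGroup (SLR n) :=
  @Matrix.SpecialLinearGroup.topologicalGroup (Fin n) ℝ _ _ _ _ _

instance : BorelSpace (SLR n) := ⟨rfl⟩

lemma isClosedEmbedding_coe :
    Topology.IsClosedEmbedding (fun g : SLR n => (g : Matrix (Fin n) (Fin n) ℝ)) :=
  Matrix.SpecialLinearGroup.isClosedEmbedding_val

instance : T2Space (SLR n) := isClosedEmbedding_coe.isEmbedding.t2Space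

instance : LocallyCompactSpace (SLR n) :=
  have : LocallyCompactSpace (Matrix (Fin n) (Fin n) ℝ) :=
    inferInstanceAs (LocallyCompactSpace (Fin n → Fin n → ℝ))
  isClosedEmbedding_coe.locallyCompactSpace

instance : SecondCountableTopology (SLR n) :=
  have : SecondCountableTopology (Matrix (Fin n) (Fin n) ℝ) :=
    inferInstanceAs (SecondCountableTopology (Fin n → Fin n → ℝ))
  isClosedEmbedding_coe.isEmbedding.secondCountableTopology

instance : Countable (SLZ n) := by
  have : Countable (Matrix (Fin n) (Fin n) ℤ) :=
    inferInstanceAs (Countable (Fin n → Fin n → ℤ))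
  have : Countable (Matrix.SpecialLinearGroup (Fin n) ℤ) := Subtype.countable
  exact (Set.countable_range _).to_subtype

lemma measurable_mulVec (v : Fin n → ℝ) :
    Measurable fun g : SLR n => (g : Matrix (Fin n) (Fin n) ℝ).mulVec v :=
  (isClosedEmbedding_coe.continuous.matrix_mulVec continuous_const).measurable

end SLR

section PointMeasure

variable {G : Type*} [Group G] {Γ : Subgroup G} {ι Y : Type*} [MeasurableSpace Y]

/-- A family of maps `G → Y` which right translation by elements of `Γ` merely permutes. -/
def IsPermutedBy (Γ : Subgroup G) (Φ : G → ι → Y) : Prop :=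
  ∀ g, ∀ γ ∈ Γ, ∃ e : ι ≃ ι, ∀ i, Φ (g * γ) i = Φ g (e i)

/-- The counting measure of the points `Φ g i`, as a function of the coset `gΓ`. -/
noncomputable def pointMeasure (Φ : G → ι → Y) (x : G ⧸ Γ) : Measure Y :=
  Measure.sum fun i => Measure.dirac (Φ x.out i)

lemma pointMeasure_mk {Φ : G → ι → Y} (hΦ : IsPermutedBy Γ Φ) (g : G) :
    pointMeasure Φ (g : G ⧸ Γ) = Measure.sum fun i => Measure.dirac (Φ g i) := by
  obtain ⟨γ, hγ⟩ := QuotientGroup.mk_out_eq_mul Γ g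
  obtain ⟨e, he⟩ := hΦ g γ γ.2
  rw [pointMeasure, hγ]
  simp_rw [he]
  exact Measure.sum_comp_equiv e fun i => Measure.dirac (Φ g i)

lemma lintegral_pointMeasure_mk {Φ : G → ι → Y} (hΦ : IsPermutedBy Γ Φ) (g : G)
    {f : Y → ℝ≥0∞} (hf : Measurable f) :
    ∫⁻ y, f y ∂pointMeasure Φ (g : G ⧸ Γ) = ∑' i, f (Φ g i) := by
  rw [pointMeasure_mk hΦ, lintegral_sum_measure]
  simp_rw [lintegral_dirac' _ hf]

lemma pointMeasure_mk_apply {Φ : G → ι → Y} (hΦ : IsPermutedBy Γ Φ) (g : G)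
    {s : Set Y} (hs : MeasurableSet s) :
    pointMeasure Φ (g : G ⧸ Γ) s = ∑' i, s.indicator 1 (Φ g i) := by
  rw [pointMeasure_mk hΦ, Measure.sum_apply _ hs]
  simp_rw [Measure.dirac_apply' _ hs]

variable [MeasurableSpace G]

lemma measurable_pointMeasure [Countable ι] {Φ : G → ι → Y} (hΦ : IsPermutedBy Γ Φ)
    (hm : ∀ i, Measurable fun g => Φ g i) :
    Measurable (pointMeasure Φ : G ⧸ Γ → Measure Y) := by
  refine Measure.measurable_of_measurable_coe _ fun s hs => ?_
  rw [QuotientGroup.measurable_from_quotient]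
  have : (fun x : G ⧸ Γ => pointMeasure Φ x s) ∘ ((↑) : G → G ⧸ Γ) =
      fun g => ∑' i, s.indicator 1 (Φ g i) :=
    funext fun g => pointMeasure_mk_apply hΦ g hs
  rw [this]
  exact Measurable.tsum fun i => (measurable_one.indicator hs).comp (hm i)

lemma lintegral_bind_pointMeasure [Countable ι] {Φ : G → ι → Y} (hΦ : IsPermutedBy Γ Φ)
    (hm : ∀ i, Measurable fun g => Φ g i) (μ : Measure (G ⧸ Γ)) {f : Y → ℝ≥0∞}
    (hf : Measurable f) :
    ∫⁻ y, f y ∂μ.bind (pointMeasure Φ) = ∫⁻ x, ∫⁻ y, f y ∂pointMeasure Φ x ∂μ :=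
  Measure.lintegral_bind (measurable_pointMeasure hΦ hm).aemeasurable hf.aemeasurable

lemma measurable_lintegral_pointMeasure [Countable ι] {Φ : G → ι → Y} (hΦ : IsPermutedBy Γ Φ)
    (hm : ∀ i, Measurable fun g => Φ g i) {f : Y → ℝ≥0∞} (hf : Measurable f) :
    Measurable fun x : G ⧸ Γ => ∫⁻ y, f y ∂pointMeasure Φ x :=
  (Measure.measurable_lintegral hf).comp (measurable_pointMeasure hΦ hm)

end PointMeasure

section Uniqueness

variable {G : Type*} [Group G] {Γ : Subgroup G}

lemma isPermutedBy_mul : IsPermutedBy Γ fun (g : G) (γ : Γ) => g * γ := fun g γ hγ =>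
  ⟨Equiv.mulLeft ⟨γ, hγ⟩, fun i => by simp [mul_assoc]⟩

variable [MeasurableSpace G]

lemma measurable_coset_smul [MeasurableMul G] (h : G) :
    Measurable fun x : G ⧸ Γ => h • x := by
  rw [QuotientGroup.measurable_from_quotient]
  exact QuotientGroup.measurable_coe.comp (measurable_const_mul h)

lemma lintegral_coset_smul [MeasurableMul G] (μ : Measure (G ⧸ Γ))
    [SMulInvariantMeasure G (G ⧸ Γ) μ] (h : G) {F : G ⧸ Γ → ℝ≥0∞} (hF : Measurable F) :
    ∫⁻ x, F (h • x) ∂μ = ∫⁻ x, F x ∂μ := by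
  rw [← lintegral_map hF (measurable_coset_smul h)]
  congr 1
  ext s hs
  rw [Measure.map_apply (measurable_coset_smul h) hs,
    SMulInvariantMeasure.measure_preimage_smul h hs]

/-- The pullback to `G` of a measure on `G ⧸ Γ`. -/
noncomputable def cosetLift (μ : Measure (G ⧸ Γ)) : Measure G :=
  μ.bind (pointMeasure fun (g : G) (γ : Γ) => g * γ)

lemma lintegral_cosetLift [MeasurableMul G] [Countable Γ] (μ : Measure (G ⧸ Γ))
    {f : G → ℝ≥0∞} (hf : Measurable f) :
    ∫⁻ g, f g ∂cosetLift μ =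
      ∫⁻ x, ∫⁻ g, f g ∂pointMeasure (fun (g : G) (γ : Γ) => g * γ) x ∂μ :=
  lintegral_bind_pointMeasure isPermutedBy_mul (fun γ => measurable_mul_const (γ : G)) μ hf

instance [MeasurableMul G] [Countable Γ] (μ : Measure (G ⧸ Γ)) [SMulInvariantMeasure G (G ⧸ Γ) μ] :
    (cosetLift μ).IsMulLeftInvariant := by
  refine ⟨fun h => Measure.ext_of_lintegral _ fun f hf => ?_⟩
  rw [lintegral_map hf (measurable_const_mul h),
    lintegral_cosetLift μ (f := fun g => f (h * g)) (hf.comp (measurable_const_mul h)),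
    lintegral_cosetLift μ hf,
    ← lintegral_coset_smul μ h (measurable_lintegral_pointMeasure isPermutedBy_mul
      (fun γ => measurable_mul_const (γ : G)) hf)]
  refine lintegral_congr fun x => ?_
  induction x using QuotientGroup.induction_on with | H g => ?_
  rw [MulAction.Quotient.smul_coe, smul_eq_mul, lintegral_pointMeasure_mk isPermutedBy_mul _ hf,
    lintegral_pointMeasure_mk isPermutedBy_mul _ (f := fun g => f (h * g))
      (hf.comp (measurable_const_mul h))]
  simp only [mul_assoc]

/-- Cosets of `Γ` meet each compact set in a uniformly bounded number of points. -/
def HasBoundedFibers [TopologicalSpace G] (Γ : Subgroup G) : Prop :=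
  ∀ K : Set G, IsCompact K → ∃ C : ℝ≥0, ∀ g, ∑' γ : Γ, K.indicator (1 : G → ℝ≥0∞) (g * γ) ≤ C

variable [TopologicalSpace G] [IsTopologicalGroup G] [BorelSpace G]
  [Countable Γ]

lemma lintegral_cosetLift_weight (μ : Measure (G ⧸ Γ)) {w : G → ℝ≥0∞} (hw : Measurable w)
    (hw1 : ∀ g, ∑' γ : Γ, w (g * γ) = 1) {F : G ⧸ Γ → ℝ≥0∞} (hF : Measurable F) :
    ∫⁻ g, w g * F g ∂cosetLift μ = ∫⁻ x, F x ∂μ := by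
  have hm : Measurable fun g : G => w g * F g := hw.mul (hF.comp QuotientGroup.measurable_coe)
  rw [lintegral_cosetLift μ hm]
  refine lintegral_congr fun x => ?_
  induction x using QuotientGroup.induction_on with | H g => ?_
  rw [lintegral_pointMeasure_mk isPermutedBy_mul _ hm]
  simp_rw [QuotientGroup.mk_mul_of_mem g (SetLike.coe_mem _), ENNReal.tsum_mul_right, hw1, one_mul]

variable [T2Space G]

lemma isFiniteMeasureOnCompacts_cosetLift (hΓ : HasBoundedFibers Γ) (μ : Measure (G ⧸ Γ))
    [IsProbabilityMeasure μ] : IsFiniteMeasureOnCompacts (cosetLift μ) := by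
  refine ⟨fun K hK => ?_⟩
  obtain ⟨C, hC⟩ := hΓ K hK
  rw [← lintegral_indicator_one hK.measurableSet,
    lintegral_cosetLift μ (measurable_one.indicator hK.measurableSet)]
  refine (lintegral_mono (g := fun _ => (C : ℝ≥0∞)) fun x => ?_).trans_lt (by simp)
  induction x using QuotientGroup.induction_on with | H g => ?_
  rw [lintegral_pointMeasure_mk isPermutedBy_mul _ (measurable_one.indicator hK.measurableSet)]
  exact hC g

variable [SecondCountableTopology G] [LocallyCompactSpace G]

lemma exists_weight (hΓ : HasBoundedFibers Γ) :
    ∃ w : G → ℝ≥0∞, Measurable w ∧ ∀ g, ∑' γ : Γ, w (g * γ) = 1 := by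
  choose C hC using fun m => hΓ (compactCovering G m) (isCompact_compactCovering G m)
  let c : ℕ → ℝ≥0∞ := fun m => (2⁻¹ ^ m) / (C m + 1)
  let u : G → ℝ≥0∞ := fun g => ∑' m, c m * (compactCovering G m).indicator 1 g
  let s : G → ℝ≥0∞ := fun g => ∑' γ : Γ, u (g * γ)
  have hu : Measurable u := Measurable.tsum fun m =>
    (measurable_one.indicator (isCompact_compactCovering G m).measurableSet).const_mul _
  have hs : Measurable s := Measurable.tsum fun γ => hu.comp (measurable_mul_const _)
  have hsinv : ∀ g, ∀ γ : Γ, s (g * γ) = s g := fun g γ => by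
    simp only [s, mul_assoc]
    exact (Equiv.mulLeft γ).tsum_eq fun δ : Γ => u (g * δ)
  have hcpos : ∀ m, c m ≠ 0 := fun m => by simp [c, ENNReal.div_eq_zero_iff]
  have hspos : ∀ g, s g ≠ 0 := fun g h => by
    have h1 : u g = 0 := by
      have := ENNReal.tsum_eq_zero.1 h 1
      simpa using this
    obtain ⟨m, hm⟩ := exists_mem_compactCovering g
    have := ENNReal.tsum_eq_zero.1 h1 m
    simp [hm, hcpos] at this
  have hsfin : ∀ g, s g ≠ ∞ := fun g => by
    have : s g ≤ ∑' m : ℕ, (2⁻¹ : ℝ≥0∞) ^ m := by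
      simp only [s, u]
      rw [ENNReal.tsum_comm]
      refine ENNReal.tsum_le_tsum fun m => ?_
      rw [ENNReal.tsum_mul_left]
      calc c m * _ ≤ c m * (C m + 1) := by
            gcongr
            exact (hC m g).trans le_self_add
        _ = 2⁻¹ ^ m := ENNReal.div_mul_cancel (by simp) (by simp)
    refine ne_top_of_le_ne_top ?_ this
    rw [ENNReal.tsum_geometric]
    simp
  refine ⟨fun g => u g / s g, hu.div hs, fun g => ?_⟩
  simp_rw [hsinv, div_eq_mul_inv]
  rw [ENNReal.tsum_mul_right]
  exact ENNReal.mul_inv_cancel (hspos g) (hsfin g)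

/-- An invariant probability measure on `G ⧸ Γ` is unique. -/
theorem coset_invariant_unique (hΓ : HasBoundedFibers Γ) (μ ν : Measure (G ⧸ Γ))
    [IsProbabilityMeasure μ] [IsProbabilityMeasure ν] [SMulInvariantMeasure G (G ⧸ Γ) μ]
    [SMulInvariantMeasure G (G ⧸ Γ) ν] : μ = ν := by
  obtain ⟨w, hw, hw1⟩ := exists_weight hΓ
  have key : ∀ (ρ : Measure (G ⧸ Γ)) [IsProbabilityMeasure ρ] [SMulInvariantMeasure G (G ⧸ Γ) ρ],
      ∃ c : ℝ≥0∞, ∀ F : G ⧸ Γ → ℝ≥0∞, Measurable F →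
        ∫⁻ x, F x ∂ρ = c * ∫⁻ g : G, w g * F g ∂Measure.haar := fun ρ _ _ => by
    have := isFiniteMeasureOnCompacts_cosetLift hΓ ρ
    refine ⟨Measure.haarScalarFactor (cosetLift ρ) Measure.haar, fun F hF => ?_⟩
    rw [← lintegral_cosetLift_weight ρ hw hw1 hF]
    conv_lhs => rw [Measure.isMulLeftInvariant_eq_smul (cosetLift ρ) Measure.haar]
    rw [lintegral_smul_measure]
    rfl
  obtain ⟨a, ha⟩ := key μ
  obtain ⟨b, hb⟩ := key ν
  set I := ∫⁻ g : G, w g ∂Measure.haar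
  have ha1 : a * I = 1 := by simpa using (ha 1 measurable_one).symm
  have hb1 : b * I = 1 := by simpa using (hb 1 measurable_one).symm
  have hab : a = b := by
    calc a = a * (b * I) := by rw [hb1, mul_one]
      _ = b * (a * I) := by ring
      _ = b := by rw [ha1, mul_one]
  refine Measure.ext_of_lintegral _ fun F hF => ?_
  rw [ha F hF, hb F hF, hab]

end Uniqueness

namespace SLR
variable {n : ℕ}

lemma finite_slz_inter_compact {K : Set (SLR n)} (hK : IsCompact K) :
    {γ : SLZ n | (γ : SLR n) ∈ K}.Finite := by
  have hb : ∃ B : ℝ, ∀ g ∈ K, ∀ i j, |(g : Matrix (Fin n) (Fin n) ℝ) i j| ≤ B := by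
    have h1 : ∀ p : Fin n × Fin n, ∃ B : ℝ, ∀ g ∈ K, |(g : Matrix (Fin n) (Fin n) ℝ) p.1 p.2| ≤ B :=
      fun p => by
        have hc : Continuous fun g : SLR n => (g : Matrix (Fin n) (Fin n) ℝ) p.1 p.2 :=
          isClosedEmbedding_coe.continuous.matrix_elem p.1 p.2
        simpa using hK.exists_bound_of_continuousOn hc.continuousOn
    choose B hB using h1
    exact ⟨∑ p, |B p|, fun g hg i j => ((hB (i, j) g hg).trans (le_abs_self _)).trans
      (Finset.single_le_sum (f := fun p => |B p|) (fun _ _ => abs_nonneg _)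
        (Finset.mem_univ (i, j)))⟩
  obtain ⟨B, hB⟩ := hb
  have hfin := (Set.finite_Icc (fun _ _ => -⌈B⌉ : Fin n → Fin n → ℤ) (fun _ _ => ⌈B⌉)).image
    (fun m i j => (m i j : ℝ))
  refine Set.Finite.of_finite_image (hfin.subset ?_)
    (f := fun γ : SLZ n => ((γ : SLR n) : Matrix (Fin n) (Fin n) ℝ))
    fun γ _ δ _ h => Subtype.ext (Subtype.ext h)
  rintro _ ⟨⟨_, m, rfl⟩, hγ, rfl⟩
  have hle : ∀ i j, |m.1 i j| ≤ ⌈B⌉ := fun i j => by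
    have := hB _ hγ i j
    have h2 : |((m.1 i j : ℤ) : ℝ)| ≤ ⌈B⌉ := (by simpa using this : _ ≤ B).trans (Int.le_ceil B)
    exact_mod_cast h2
  exact ⟨m.1, ⟨fun i j => (abs_le.1 (hle i j)).1, fun i j => (abs_le.1 (hle i j)).2⟩, rfl⟩

lemma hasBoundedFibers_slz : HasBoundedFibers (SLZ n) := by
  intro K hK
  have hT := finite_slz_inter_compact (hK.inv.mul hK)
  set T := {γ : SLZ n | (γ : SLR n) ∈ K⁻¹ * K}
  refine ⟨hT.toFinset.card, fun g => ?_⟩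
  by_cases h : ∃ γ₀ : SLZ n, g * γ₀ ∈ K
  · obtain ⟨γ₀, hγ₀⟩ := h
    rw [← (Equiv.mulLeft γ₀).tsum_eq]
    calc _ ≤ ∑' γ : SLZ n, T.indicator (1 : SLZ n → ℝ≥0∞) γ := by
          refine ENNReal.tsum_le_tsum fun γ => ?_
          by_cases hγ : g * (γ₀ * γ : SLZ n) ∈ K
          · rw [Set.indicator_of_mem (show γ ∈ T from Set.mem_mul.2
              ⟨(g * γ₀)⁻¹, Set.inv_mem_inv.2 hγ₀, _, hγ, by simp [mul_assoc]⟩)]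
            exact Set.indicator_le_self' (fun _ _ => zero_le) _
          · rw [Equiv.coe_mulLeft, Set.indicator_of_notMem hγ]
            exact zero_le
      _ = _ := by
          rw [tsum_eq_sum (s := hT.toFinset) fun γ hγ =>
            Set.indicator_of_notMem (by simpa using hγ) _,
            Finset.sum_congr rfl fun γ hγ => Set.indicator_of_mem (hT.mem_toFinset.1 hγ) _]
          simp
  · have : ∀ γ : SLZ n, K.indicator (1 : SLR n → ℝ≥0∞) (g * γ) = 0 := fun γ =>
      Set.indicator_of_notMem (fun hγ => h ⟨γ, hγ⟩) _
    simp [this]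

end SLR

section Counting

variable {n k : ℕ}

/-- The real `k`-tuple of vectors underlying an integral one. -/
def realTuple (j : Fin k → Fin n → ℤ) : Fin k → Fin n → ℝ := fun l i => j l i

/-- The half-open unit cube with lowest corner `j`. -/
def unitCube (j : Fin k → Fin n → ℤ) : Set (Fin k → Fin n → ℝ) := {y | ∀ l i, ⌊y l i⌋ = j l i}

lemma unitCube_eq_pi (j : Fin k → Fin n → ℤ) :
    unitCube j = Set.univ.pi fun l => Set.univ.pi fun i => Set.Ico (j l i : ℝ) (j l i + 1) := by
  ext y
  simp [unitCube, Int.floor_eq_iff]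

lemma volume_unitCube (j : Fin k → Fin n → ℤ) : volume (unitCube j) = 1 := by
  rw [unitCube_eq_pi, volume_pi_pi]
  simp [volume_pi_pi]

lemma measurableSet_unitCube (j : Fin k → Fin n → ℤ) : MeasurableSet (unitCube j) := by
  rw [unitCube_eq_pi]
  exact .univ_pi fun _ => .univ_pi fun _ => measurableSet_Ico

lemma pairwise_disjoint_unitCube :
    Pairwise (Function.onFun Disjoint (unitCube : (Fin k → Fin n → ℤ) → _)) := by
  intro j j' h
  refine Set.disjoint_left.2 fun y hy hy' => h ?_
  ext l i
  exact (hy l i).symm.trans (hy' l i)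

lemma dist_realTuple_le {j : Fin k → Fin n → ℤ} {y : Fin k → Fin n → ℝ} (hy : y ∈ unitCube j) :
    dist y (realTuple j) ≤ 1 := by
  refine (dist_pi_le_iff zero_le_one).2 fun l => (dist_pi_le_iff zero_le_one).2 fun i => ?_
  have := Int.floor_eq_iff.1 (hy l i)
  rw [Real.dist_eq, realTuple, abs_le]
  constructor <;> linarith

lemma dist_smul_realTuple_le {c : ℝ} (hc : 0 < c) {j : Fin k → Fin n → ℤ}
    {y : Fin k → Fin n → ℝ} (hy : y ∈ unitCube j) : dist (c • y) (c • realTuple j) ≤ c := by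
  rw [dist_smul₀, Real.norm_of_nonneg hc.le]
  exact mul_le_of_le_one_right hc.le (dist_realTuple_le hy)

/-- The number of integral tuples `j` with `c j ∈ S`. -/
noncomputable def tupleCount (c : ℝ) (S : Set (Fin k → Fin n → ℝ)) : ℝ≥0∞ :=
  ∑' j : Fin k → Fin n → ℤ, S.indicator 1 (c • realTuple j)

lemma tupleCount_eq_volume (c : ℝ) (S : Set (Fin k → Fin n → ℝ)) :
    tupleCount c S = volume (⋃ j ∈ {j | c • realTuple j ∈ S}, unitCube j) := by
  rw [measure_biUnion (Set.to_countable _) (pairwise_disjoint_unitCube.set_pairwise _)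
    fun j _ => measurableSet_unitCube j]
  simp_rw [volume_unitCube]
  rw [tsum_subtype _ fun _ => 1]
  rfl

lemma volume_preimage_smul {c : ℝ} (hc : 0 < c) (S : Set (Fin k → Fin n → ℝ)) :
    ENNReal.ofReal c ^ (k * n) * volume ((c • ·) ⁻¹' S) = volume S := by
  have hd : Module.finrank ℝ (Fin k → Fin n → ℝ) = k * n := by simp [Module.finrank_pi_fintype]
  have hp : 0 < c ^ (k * n) := pow_pos hc _
  have h := Measure.addHaar_preimage_smul (volume : Measure (Fin k → Fin n → ℝ)) hc.ne' S
  rw [hd, abs_of_pos (inv_pos.2 hp), ENNReal.ofReal_inv_of_pos hp, ENNReal.ofReal_pow hc.le] at h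
  rw [h, ← mul_assoc, ENNReal.mul_inv_cancel, one_mul]
  · exact pow_ne_zero _ (ENNReal.ofReal_pos.2 hc).ne'
  · exact ENNReal.pow_ne_top ENNReal.ofReal_ne_top

lemma tupleCount_le {c : ℝ} (hc : 0 < c) (S : Set (Fin k → Fin n → ℝ)) :
    ENNReal.ofReal c ^ (k * n) * tupleCount c S ≤ volume (Metric.cthickening c S) := by
  rw [← volume_preimage_smul hc (Metric.cthickening c S), tupleCount_eq_volume]
  refine mul_le_mul_right (measure_mono ?_) _
  refine Set.iUnion₂_subset fun j hj y hy => ?_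
  have hj' : c • realTuple j ∈ S := hj
  exact Metric.mem_cthickening_of_dist_le (c • y) (c • realTuple j) c S hj'
    (dist_smul_realTuple_le hc hy)

lemma le_tupleCount {c : ℝ} (hc : 0 < c) {K U : Set (Fin k → Fin n → ℝ)}
    (h : Metric.cthickening c K ⊆ U) :
    volume K ≤ ENNReal.ofReal c ^ (k * n) * tupleCount c U := by
  rw [← volume_preimage_smul hc K, tupleCount_eq_volume]
  gcongr
  intro y hy
  refine Set.mem_iUnion₂.2 ⟨fun l i => ⌊y l i⌋, h ?_, fun l i => rfl⟩
  refine Metric.mem_cthickening_of_dist_le _ _ _ _ hy ?_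
  rw [dist_comm]
  exact dist_smul_realTuple_le hc fun l i => rfl

end Counting

section ModPrime

variable {n k : ℕ}

/-- The reduction modulo `p` of an integral tuple, as a matrix. -/
def modMatrix (p : ℕ) (j : Fin k → Fin n → ℤ) : Matrix (Fin k) (Fin n) (ZMod p) :=
  Matrix.of fun l i => (j l i : ZMod p)

/-- `LinearIndependent ℤ j` passes to the reduction modulo large primes. -/
def IndependentModLargePrimes (n k : ℕ) : Prop :=
  ∀ (j : Fin k → Fin n → ℤ) (p : ℕ) (B : ℝ), p.Prime → LinearIndependent ℤ j →
    (∀ l i, |(j l i : ℝ)| ≤ B) → 2 * B ^ k < p → LinearIndependent (ZMod p) (modMatrix p j).row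

lemma eq_zero_of_cast_zmod {p : ℕ} {z : ℤ} (hz : (z : ZMod p) = 0) (h : |(z : ℝ)| < p) : z = 0 := by
  rw [ZMod.intCast_zmod_eq_zero_iff_dvd] at hz
  refine Int.eq_zero_of_abs_lt_dvd hz ?_
  exact_mod_cast h

lemma linearIndependent_fin_one_iff {j : Fin 1 → Fin n → ℤ} : LinearIndependent ℤ j ↔ j 0 ≠ 0 := by
  rw [linearIndependent_unique_iff]
  rfl

lemma independentModLargePrimes_one : IndependentModLargePrimes n 1 := by
  intro j p B hp hj hB hpB
  have := Fact.mk hp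
  rw [linearIndependent_unique_iff]
  obtain ⟨i, hi⟩ := Function.ne_iff.1 (linearIndependent_fin_one_iff.1 hj)
  intro h
  refine hi (eq_zero_of_cast_zmod (congr_fun h i) ?_)
  have := hB 0 i
  have h0 := abs_nonneg (j 0 i : ℝ)
  linarith

lemma linearIndependent_fin_two_iff {R V : Type*} [Ring R] [AddCommGroup V] [Module R V]
    {v : Fin 2 → V} :
    LinearIndependent R v ↔ ∀ s t : R, s • v 0 + t • v 1 = 0 → s = 0 ∧ t = 0 := by
  rw [← LinearIndependent.pair_iff]
  congr!
  ext l
  fin_cases l <;> rfl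

lemma independentModLargePrimes_two : IndependentModLargePrimes n 2 := by
  intro j p B hp hj hB hpB
  have := Fact.mk hp
  by_contra hdep
  have hminor : ∀ a b, j 0 a * j 1 b = j 1 a * j 0 b := fun a b => by
    rw [← sub_eq_zero]
    refine eq_zero_of_cast_zmod (p := p) ?_ ?_
    · rw [linearIndependent_fin_two_iff] at hdep
      push Not at hdep
      obtain ⟨s, t, hst, hne⟩ := hdep
      have ha : s * (j 0 a : ZMod p) + t * (j 1 a : ZMod p) = 0 := congr_fun hst a
      have hb : s * (j 0 b : ZMod p) + t * (j 1 b : ZMod p) = 0 := congr_fun hst b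
      push_cast
      by_cases hs : s = 0
      · refine (mul_eq_zero.1 (?_ : t * _ = 0)).resolve_left (hne hs)
        linear_combination (j 0 a : ZMod p) * hb - (j 0 b : ZMod p) * ha
      · refine (mul_eq_zero.1 (?_ : s * _ = 0)).resolve_left hs
        linear_combination (j 1 b : ZMod p) * ha - (j 1 a : ZMod p) * hb
    · push_cast
      calc _ ≤ |(j 0 a : ℝ)| * |(j 1 b : ℝ)| + |(j 1 a : ℝ)| * |(j 0 b : ℝ)| := by
            rw [← abs_mul, ← abs_mul]
            exact abs_sub _ _
        _ ≤ B * B + B * B := by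
            have hB0 : 0 ≤ B := (abs_nonneg _).trans (hB 0 a)
            gcongr <;> exact hB _ _
        _ < p := by linarith
  have h0 : j 0 ≠ 0 := hj.ne_zero 0
  obtain ⟨a, ha⟩ := Function.ne_iff.1 h0
  rw [linearIndependent_fin_two_iff] at hj
  refine ha (neg_eq_zero.1 (hj (j 1 a) (-j 0 a) ?_).2)
  ext b
  have := hminor a b
  simp only [Pi.add_apply, Pi.smul_apply, smul_eq_mul, Pi.zero_apply]
  linarith

/-- The number of nonzero covectors modulo `p` annihilating the reduction of `j`. -/
noncomputable def annihilatorCount (p : ℕ) (j : Fin k → Fin n → ℤ) : ℕ :=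
  Nat.card {a : Fin n → ZMod p // a ≠ 0 ∧ (modMatrix p j).mulVec a = 0}

lemma annihilatorCount_add_one (p : ℕ) [NeZero p] (j : Fin k → Fin n → ℤ) :
    annihilatorCount p j + 1 = Nat.card (LinearMap.ker (modMatrix p j).mulVecLin) := by
  have h : annihilatorCount p j =
      ((LinearMap.ker (modMatrix p j).mulVecLin : Set (Fin n → ZMod p)) \ {0}).ncard :=
    Nat.card_congr (Equiv.subtypeEquivRight fun a => by simp [and_comm])
  rw [h, Set.ncard_sdiff_singleton_add_one (Submodule.zero_mem _)]
  rfl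

lemma annihilatorCount_le {p : ℕ} (hp : p.Prime) {j : Fin k → Fin n → ℤ}
    (hj : LinearIndependent (ZMod p) (modMatrix p j).row) :
    annihilatorCount p j ≤ p ^ (n - k) := by
  have := Fact.mk hp
  have h := LinearMap.finrank_range_add_finrank_ker (modMatrix p j).mulVecLin
  have hr := hj.rank_matrix
  rw [Matrix.rank] at hr
  rw [hr, Module.finrank_fin_fun, Fintype.card_fin] at h
  have := annihilatorCount_add_one p j
  rw [Module.natCard_eq_pow_finrank (K := ZMod p), Nat.card_zmod] at this
  rw [show n - k = Module.finrank (ZMod p) (LinearMap.ker (modMatrix p j).mulVecLin) by omega]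
  omega

lemma le_annihilatorCount {p : ℕ} (hp : p.Prime) (j : Fin k → Fin n → ℤ) :
    p ^ (n - k) ≤ annihilatorCount p j + 1 := by
  have := Fact.mk hp
  have h := LinearMap.finrank_range_add_finrank_ker (modMatrix p j).mulVecLin
  have hr := (modMatrix p j).rank_le_height
  rw [Matrix.rank] at hr
  rw [Module.finrank_fin_fun] at h
  rw [annihilatorCount_add_one, Module.natCard_eq_pow_finrank (K := ZMod p), Nat.card_zmod]
  exact Nat.pow_le_pow_right hp.pos (by omega)

end ModPrime

section HeckeMatrix

variable {n : ℕ}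

/-- The reduction modulo `p` of the pairing of a covector modulo `p` and an integral vector. -/
def modPairing {p : ℕ} (a : Fin n → ZMod p) (x : Fin n → ℤ) : ZMod p := ∑ i, a i * x i

lemma exists_matrix_range_eq {p : ℕ} (hp : p.Prime) {a : Fin n → ZMod p} (ha : a ≠ 0) :
    ∃ B : Matrix (Fin n) (Fin n) ℤ, B.det = p ∧
      ∀ y, (∃ x, B.mulVec x = y) ↔ modPairing a y = 0 := by
  have := Fact.mk hp
  obtain ⟨i, hi⟩ := Function.ne_iff.1 ha
  replace hi : a i ≠ 0 := hi
  have hex : ∀ l, ∃ z : ℤ, (z : ZMod p) = a l / a i ∧ (l = i → z = 1) := fun l => by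
    by_cases hl : l = i
    · exact ⟨1, by rw [hl, div_self hi, Int.cast_one], fun _ => rfl⟩
    · obtain ⟨z, hz⟩ := ZMod.intCast_surjective (a l / a i)
      exact ⟨z, hz, fun h => absurd h hl⟩
  choose b hb hb1 using hex
  let r : Fin n → ℤ := fun l => (if l = i then p + b i else 0) - b l
  have hr : ∀ x : Fin n → ℤ, r ⬝ᵥ x = (p + b i) * x i - ∑ l, b l * x l := fun x => by
    simp [r, dotProduct, sub_mul, Finset.sum_sub_distrib, ite_mul]
  let B : Matrix (Fin n) (Fin n) ℤ := (1 : Matrix (Fin n) (Fin n) ℤ).updateRow i r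
  have hB : ∀ x l, B.mulVec x l = if l = i then r ⬝ᵥ x else x l := fun x l => by
    by_cases h : l = i
    · subst h; simp [B, Matrix.mulVec]
    · rw [if_neg h]
      have : B.mulVec x l = (1 : Matrix (Fin n) (Fin n) ℤ).mulVec x l := by
        simp only [B, Matrix.mulVec, Matrix.updateRow_ne h]
      rw [this, Matrix.one_mulVec]
  have hsum : ∀ y : Fin n → ℤ, ((∑ l, b l * y l : ℤ) : ZMod p) = (a i)⁻¹ * modPairing a y :=
    fun y => by
      push_cast
      simp_rw [hb, modPairing, Finset.mul_sum]
      exact Finset.sum_congr rfl fun l _ => by ring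
  have hbi : b i = 1 := hb1 i rfl
  refine ⟨B, ?_, fun y => ⟨?_, fun hy => ?_⟩⟩
  · have h : B.det = Matrix.cramer (1 : Matrix (Fin n) (Fin n) ℤ) r i := by
      rw [Matrix.cramer_apply, ← Matrix.det_transpose B]
      refine congr_arg Matrix.det ((Matrix.updateCol_transpose (M := 1)).symm.trans ?_)
      rw [Matrix.transpose_one]
    rw [h, Matrix.cramer_one]
    simp [r]
  · rintro ⟨x, rfl⟩
    refine (mul_eq_zero.1 (?_ : (a i)⁻¹ * _ = 0)).resolve_left (inv_ne_zero hi)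
    rw [← hsum]
    have h1 : ∑ l, b l * B.mulVec x l = ∑ l, b l * x l + b i * (r ⬝ᵥ x - x i) := by
      rw [← sub_eq_iff_eq_add', ← Finset.sum_sub_distrib, Finset.sum_eq_single i]
      · rw [hB, if_pos rfl]; ring
      · intro l _ hl
        rw [hB, if_neg hl, sub_self]
      · simp
    rw [h1, hr]
    push_cast
    rw [hbi, CharP.cast_eq_zero]
    push_cast
    ring
  · have hdvd : (p : ℤ) ∣ ∑ l, b l * y l := by
      rw [← ZMod.intCast_zmod_eq_zero_iff_dvd, hsum, hy, mul_zero]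
    obtain ⟨q, hq⟩ := hdvd
    have hp0 : (p : ℤ) ≠ 0 := by exact_mod_cast hp.ne_zero
    refine ⟨Function.update y i q, funext fun l => ?_⟩
    rw [hB]
    split_ifs with hl
    · subst hl
      have h2 : ∑ m, b m * Function.update y l q m = ∑ m, b m * y m + b l * (q - y l) := by
        rw [← sub_eq_iff_eq_add', ← Finset.sum_sub_distrib, Finset.sum_eq_single l]
        · rw [Function.update_self]; ring
        · intro m _ hm
          rw [Function.update_of_ne hm, sub_self]
        · simp
      rw [hr, h2, hq, Function.update_self]
      rw [hbi]
      ring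
    · rw [Function.update_of_ne hl]

/-- An integral matrix of determinant `p` whose columns span the vectors annihilated by `a`. -/
noncomputable def heckeMatrix {p : ℕ} (hp : p.Prime) (a : {a : Fin n → ZMod p // a ≠ 0}) :
    Matrix (Fin n) (Fin n) ℤ :=
  (exists_matrix_range_eq hp a.2).choose

variable {p : ℕ} (hp : p.Prime) (a : {a : Fin n → ZMod p // a ≠ 0})

lemma det_heckeMatrix : (heckeMatrix hp a).det = p :=
  (exists_matrix_range_eq hp a.2).choose_spec.1

lemma heckeMatrix_range (y : Fin n → ℤ) :
    (∃ x, (heckeMatrix hp a).mulVec x = y) ↔ modPairing a.1 y = 0 :=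
  (exists_matrix_range_eq hp a.2).choose_spec.2 y

/-- The reduction of an element of `SL(n, ℤ)` modulo `p`. -/
def modReduction (p : ℕ) (m : Matrix.SpecialLinearGroup (Fin n) ℤ) :
    Matrix (Fin n) (Fin n) (ZMod p) :=
  (Int.castRingHom (ZMod p)).mapMatrix m.1

lemma modReduction_mul_eq_one {p : ℕ} {m m' : Matrix.SpecialLinearGroup (Fin n) ℤ}
    (h : m * m' = 1) : modReduction p m * modReduction p m' = 1 := by
  rw [modReduction, modReduction, ← map_mul]
  exact (congr_arg _ (congr_arg Subtype.val h)).trans (map_one _)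

/-- The action of `SL(n, ℤ)` on the covectors modulo `p`. -/
def covectorEquiv (p : ℕ) (m : Matrix.SpecialLinearGroup (Fin n) ℤ) :
    (Fin n → ZMod p) ≃ (Fin n → ZMod p) where
  toFun a := Matrix.vecMul a (modReduction p m⁻¹)
  invFun a := Matrix.vecMul a (modReduction p m)
  left_inv a := by
    beta_reduce
    rw [Matrix.vecMul_vecMul, modReduction_mul_eq_one (inv_mul_cancel m), Matrix.vecMul_one]
  right_inv a := by
    beta_reduce
    rw [Matrix.vecMul_vecMul, modReduction_mul_eq_one (mul_inv_cancel m), Matrix.vecMul_one]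

lemma covectorEquiv_zero (p : ℕ) (m : Matrix.SpecialLinearGroup (Fin n) ℤ) :
    covectorEquiv p m 0 = 0 :=
  Matrix.zero_vecMul (modReduction p m⁻¹)

/-- The action of `SL(n, ℤ)` on the nonzero covectors modulo `p`. -/
def covectorAct (m : Matrix.SpecialLinearGroup (Fin n) ℤ) :
    {a : Fin n → ZMod p // a ≠ 0} ≃ {a : Fin n → ZMod p // a ≠ 0} :=
  (covectorEquiv p m).subtypeEquiv fun a => by
    have h := (covectorEquiv p m).apply_eq_iff_eq (x := a) (y := 0)
    rw [covectorEquiv_zero] at h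
    exact (not_congr h).symm

lemma modPairing_covectorAct (m : Matrix.SpecialLinearGroup (Fin n) ℤ) (x : Fin n → ℤ) :
    modPairing (covectorAct m a).1 (m.1.mulVec x) = modPairing a.1 x := by
  have h : (fun i => ((m.1.mulVec x i : ℤ) : ZMod p)) =
      (modReduction p m).mulVec fun i => x i :=
    funext fun i => RingHom.map_mulVec (Int.castRingHom (ZMod p)) m.1 x i
  calc modPairing (covectorAct m a).1 (m.1.mulVec x)
      = covectorEquiv p m a.1 ⬝ᵥ fun i => ((m.1.mulVec x i : ℤ) : ZMod p) := rfl
    _ = (covectorEquiv p m).symm (covectorEquiv p m a.1) ⬝ᵥ fun i => (x i : ZMod p) := by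
        rw [h, Matrix.dotProduct_mulVec]
        rfl
    _ = modPairing a.1 x := by
        rw [Equiv.symm_apply_apply]
        rfl

lemma exists_mul_heckeMatrix (m : Matrix.SpecialLinearGroup (Fin n) ℤ) :
    ∃ δ : Matrix.SpecialLinearGroup (Fin n) ℤ,
      m.1 * heckeMatrix hp a = heckeMatrix hp (covectorAct m a) * δ.1 := by
  have hcol : ∀ j, ∃ x, (heckeMatrix hp (covectorAct m a)).mulVec x =
      fun i => (m.1 * heckeMatrix hp a) i j := fun j => by
    have hj : (fun i => (m.1 * heckeMatrix hp a) i j) =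
        m.1.mulVec ((heckeMatrix hp a).mulVec (Pi.single j 1)) := by
      rw [Matrix.mulVec_mulVec, Matrix.mulVec_single_one]
      rfl
    rw [heckeMatrix_range, hj, modPairing_covectorAct, ← heckeMatrix_range hp a]
    exact ⟨_, rfl⟩
  choose x hx using hcol
  let δ : Matrix (Fin n) (Fin n) ℤ := Matrix.of fun i j => x j i
  have hmul : m.1 * heckeMatrix hp a = heckeMatrix hp (covectorAct m a) * δ := by
    ext i j
    exact (congr_fun (hx j) i).symm
  refine ⟨⟨δ, ?_⟩, hmul⟩
  have hdet := congr_arg Matrix.det hmul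
  rw [Matrix.det_mul, Matrix.det_mul, det_heckeMatrix, det_heckeMatrix, m.2, one_mul] at hdet
  have hp0 : (p : ℤ) ≠ 0 := by exact_mod_cast hp.ne_zero
  exact (mul_left_cancel₀ hp0 (hdet.symm.trans (mul_one _).symm))

end HeckeMatrix

section HeckeAverage

variable {n : ℕ} [NeZero n] {p : ℕ} (hp : p.Prime)

/-- The `n`-th root of `p⁻¹`. -/
noncomputable def heckeScale (n p : ℕ) : ℝ := ((p : ℝ)⁻¹) ^ ((n : ℝ)⁻¹)

lemma heckeScale_pow (p : ℕ) : heckeScale n p ^ n = (p : ℝ)⁻¹ :=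
  Real.rpow_inv_natCast_pow (by positivity) (NeZero.ne n)

include hp in
omit [NeZero n] in
lemma heckeScale_pos : 0 < heckeScale n p :=
  Real.rpow_pos_of_pos (inv_pos.2 (Nat.cast_pos.2 hp.pos)) _

/-- The element of `SL(n, ℝ)` proportional to `heckeMatrix hp a`. -/
noncomputable def heckePoint (a : {a : Fin n → ZMod p // a ≠ 0}) : SLR n :=
  ⟨heckeScale n p • (Int.castRingHom ℝ).mapMatrix (heckeMatrix hp a), by
    have hp0 : (p : ℝ) ≠ 0 := Nat.cast_ne_zero.2 hp.ne_zero
    rw [Matrix.det_smul, Fintype.card_fin, heckeScale_pow, ← RingHom.map_det, det_heckeMatrix]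
    simp [hp0]⟩

/-- The cosets of `g * heckePoint hp a`. -/
noncomputable def heckeFamily (g : SLR n) (a : {a : Fin n → ZMod p // a ≠ 0}) : Xn n :=
  ((g * heckePoint hp a : SLR n) : Xn n)

lemma isPermutedBy_heckeFamily : IsPermutedBy (SLZ n) (heckeFamily hp) := by
  rintro g _ ⟨m, rfl⟩
  refine ⟨covectorAct m, fun a => ?_⟩
  obtain ⟨δ, hδ⟩ := exists_mul_heckeMatrix hp a m
  have h : Matrix.SpecialLinearGroup.map (Int.castRingHom ℝ) m * heckePoint hp a =
      heckePoint hp (covectorAct m a) * Matrix.SpecialLinearGroup.map (Int.castRingHom ℝ) δ := by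
    refine Subtype.ext ?_
    have := congr_arg (Int.castRingHom ℝ).mapMatrix hδ
    rw [map_mul, map_mul] at this
    change (Int.castRingHom ℝ).mapMatrix m.1 *
        (heckeScale n p • (Int.castRingHom ℝ).mapMatrix (heckeMatrix hp a)) =
      (heckeScale n p • (Int.castRingHom ℝ).mapMatrix (heckeMatrix hp (covectorAct m a))) *
        (Int.castRingHom ℝ).mapMatrix δ.1
    rw [mul_smul_comm, this, smul_mul_assoc]
  rw [heckeFamily, mul_assoc, h, ← mul_assoc]
  exact QuotientGroup.mk_mul_of_mem _ ⟨δ, rfl⟩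

lemma measurable_heckeFamily (a : {a : Fin n → ZMod p // a ≠ 0}) :
    Measurable fun g : SLR n => heckeFamily hp g a :=
  QuotientGroup.measurable_coe.comp (measurable_mul_const _)

lemma pointMeasure_heckeFamily_preimage (h : SLR n) (x : Xn n) {s : Set (Xn n)}
    (hs : MeasurableSet s) : pointMeasure (heckeFamily hp) x ((h • ·) ⁻¹' s) =
      pointMeasure (heckeFamily hp) (h • x) s := by
  induction x using QuotientGroup.induction_on with | H g => ?_
  rw [pointMeasure_mk_apply (isPermutedBy_heckeFamily hp) g (measurable_coset_smul h hs)]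
  refine .trans ?_ (pointMeasure_mk_apply (isPermutedBy_heckeFamily hp) (h * g) hs).symm
  refine tsum_congr fun a => ?_
  change _ = s.indicator 1 ((h * g * heckePoint hp a : SLR n) : Xn n)
  rw [mul_assoc]
  rfl

/-- The number of nonzero covectors modulo `p`. -/
def covectorCount (n p : ℕ) : ℕ := p ^ n - 1

include hp in
omit [NeZero n] in
lemma natCard_covector : Nat.card {a : Fin n → ZMod p // a ≠ 0} = covectorCount n p := by
  have := Fact.mk hp
  rw [covectorCount, Nat.card_eq_fintype_card, Fintype.card_subtype_compl, Fintype.card_fun,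
    ZMod.card, Fintype.card_fin, Fintype.card_unique]

include hp in
lemma covectorCount_pos : 0 < covectorCount n p :=
  Nat.sub_pos_of_lt (Nat.one_lt_pow (NeZero.ne n) hp.one_lt)

lemma lintegral_heckeFamily_mk (g : SLR n) {F : Xn n → ℝ≥0∞} (hF : Measurable F) :
    ∫⁻ x, F x ∂pointMeasure (heckeFamily hp) (g : Xn n) =
      ∑' a, F ((g * heckePoint hp a : SLR n) : Xn n) :=
  lintegral_pointMeasure_mk (isPermutedBy_heckeFamily hp) g hF

lemma pointMeasure_heckeFamily_univ (x : Xn n) :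
    pointMeasure (heckeFamily hp) x Set.univ = covectorCount n p := by
  have := Fact.mk hp
  induction x using QuotientGroup.induction_on with | H g => ?_
  rw [pointMeasure_mk_apply (isPermutedBy_heckeFamily hp) g MeasurableSet.univ]
  simp [← natCard_covector hp]

/-- An invariant probability measure is unchanged by averaging over index `p` sublattices. -/
theorem lintegral_eq_heckeAverage (μ : Measure (Xn n)) [IsProbabilityMeasure μ]
    [SMulInvariantMeasure (SLR n) (Xn n) μ] {F : Xn n → ℝ≥0∞} (hF : Measurable F) :
    ∫⁻ x, F x ∂μ =
      ∫⁻ x, (covectorCount n p : ℝ≥0∞)⁻¹ * ∫⁻ y, F y ∂pointMeasure (heckeFamily hp) x ∂μ := by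
  have := Fact.mk hp
  set N : ℝ≥0∞ := (covectorCount n p : ℝ≥0∞)
  have hN0 : N ≠ 0 := Nat.cast_ne_zero.2 (covectorCount_pos hp).ne'
  have hN : N ≠ ∞ := ENNReal.natCast_ne_top _
  have hΦ := isPermutedBy_heckeFamily (n := n) hp
  have hm := measurable_heckeFamily (n := n) hp
  let ν : Measure (Xn n) := N⁻¹ • μ.bind (pointMeasure (heckeFamily hp))
  have hν : ∀ {F : Xn n → ℝ≥0∞}, Measurable F → ∫⁻ x, F x ∂ν =
      ∫⁻ x, N⁻¹ * ∫⁻ y, F y ∂pointMeasure (heckeFamily hp) x ∂μ := fun {F} hF => by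
    rw [lintegral_smul_measure, lintegral_bind_pointMeasure hΦ hm μ hF,
      lintegral_const_mul _ (measurable_lintegral_pointMeasure hΦ hm hF), smul_eq_mul]
  have hν' : ∀ {s : Set (Xn n)}, MeasurableSet s →
      ν s = ∫⁻ x, N⁻¹ * pointMeasure (heckeFamily hp) x s ∂μ := fun {s} hs => by
    rw [← lintegral_indicator_one hs, hν (measurable_one.indicator hs)]
    simp_rw [lintegral_indicator_one hs]
  have : IsProbabilityMeasure ν := ⟨by
    rw [hν' MeasurableSet.univ]
    simp_rw [pointMeasure_heckeFamily_univ]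
    rw [ENNReal.inv_mul_cancel hN0 hN, lintegral_one, measure_univ]⟩
  have : SMulInvariantMeasure (SLR n) (Xn n) ν := ⟨fun h s hs => by
    rw [hν' (measurable_coset_smul h hs), hν' hs]
    simp_rw [pointMeasure_heckeFamily_preimage hp h _ hs]
    exact lintegral_coset_smul μ h (((Measure.measurable_coe hs).comp
      (measurable_pointMeasure hΦ hm)).const_mul _)⟩
  rw [coset_invariant_unique (SLR.hasBoundedFibers_slz) μ ν, hν hF]
  rw [← coset_invariant_unique (SLR.hasBoundedFibers_slz) μ ν]

end HeckeAverage

section TupleFamily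

variable {n k : ℕ}

/-- The linearly independent `k`-tuples of integral vectors. -/
abbrev IndepTuple (n k : ℕ) := {j : Fin k → Fin n → ℤ // LinearIndependent ℤ j}

/-- A matrix applied to each vector of a tuple. -/
def tupleMap (M : Matrix (Fin n) (Fin n) ℝ) (y : Fin k → Fin n → ℝ) : Fin k → Fin n → ℝ :=
  fun l => M.mulVec (y l)

/-- The images under `g` of the linearly independent integral `k`-tuples. -/
def tupleFamily (n k : ℕ) (g : SLR n) (j : IndepTuple n k) : Fin k → Fin n → ℝ :=
  tupleMap g.1 (realTuple j.1)

lemma tupleMap_mul_realTuple (M : Matrix (Fin n) (Fin n) ℝ) (c : ℝ) (B : Matrix (Fin n) (Fin n) ℤ)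
    (j : Fin k → Fin n → ℤ) :
    tupleMap (M * c • (Int.castRingHom ℝ).mapMatrix B) (realTuple j) =
      c • tupleMap M (realTuple fun l => B.mulVec (j l)) := by
  ext l i
  have h : realTuple (fun l => B.mulVec (j l)) l =
      ((Int.castRingHom ℝ).mapMatrix B).mulVec (realTuple j l) :=
    funext fun i => RingHom.map_mulVec (Int.castRingHom ℝ) B (j l) i
  simp only [tupleMap, Pi.smul_apply]
  rw [h, Matrix.mulVec_mulVec, mul_smul_comm, Matrix.smul_mulVec]
  rfl

lemma isPermutedBy_tupleFamily : IsPermutedBy (SLZ n) (tupleFamily n k) := by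
  rintro g _ ⟨m, rfl⟩
  let φ := Matrix.SpecialLinearGroup.toLin' m
  refine ⟨(Equiv.piCongrRight fun _ => φ.toEquiv).subtypeEquiv fun j =>
    (φ.toLinearMap.linearIndependent_iff (LinearEquiv.ker φ)).symm, fun j => ?_⟩
  have := tupleMap_mul_realTuple g.1 1 m.1 j.1
  rw [one_smul, one_smul] at this
  exact this

lemma measurable_tupleFamily (j : IndepTuple n k) : Measurable fun g => tupleFamily n k g j :=
  measurable_pi_lambda _ fun _ => SLR.measurable_mulVec _

lemma tsum_indicator_one_eq_natCard {α : Type*} [Finite α] (s : Set α) :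
    ∑' a, s.indicator (1 : α → ℝ≥0∞) a = Nat.card s := by
  rw [← tsum_subtype]
  have := Fintype.ofFinite s
  simp

variable {p : ℕ} (hp : p.Prime) (a : {a : Fin n → ZMod p // a ≠ 0})

/-- The action of `heckeMatrix hp a` on linearly independent tuples. -/
noncomputable def heckeTuple (j : IndepTuple n k) : IndepTuple n k :=
  ⟨fun l => (heckeMatrix hp a).mulVec (j.1 l), j.2.map' (heckeMatrix hp a).mulVecLin <| by
    rw [LinearMap.ker_eq_bot']
    exact fun x hx => Matrix.eq_zero_of_mulVec_eq_zero
      (by rw [det_heckeMatrix]; exact_mod_cast hp.ne_zero) hx⟩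

lemma heckeTuple_injective : Function.Injective (heckeTuple (k := k) hp a) := by
  intro i j h
  refine Subtype.ext (funext fun l => sub_eq_zero.1 ?_)
  refine Matrix.eq_zero_of_mulVec_eq_zero (M := heckeMatrix hp a)
    (by rw [det_heckeMatrix]; exact_mod_cast hp.ne_zero) ?_
  rw [Matrix.mulVec_sub, sub_eq_zero]
  exact congr_fun (congr_arg Subtype.val h) l

lemma mem_range_heckeTuple {j : IndepTuple n k} :
    j ∈ Set.range (heckeTuple hp a) ↔ (modMatrix p j.1).mulVec a.1 = 0 := by
  have h : (modMatrix p j.1).mulVec a.1 = 0 ↔ ∀ l, modPairing a.1 (j.1 l) = 0 := by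
    rw [funext_iff]
    refine forall_congr' fun l => ?_
    rw [modPairing, Matrix.mulVec, dotProduct]
    simp_rw [mul_comm (a.1 _)]
    rfl
  rw [h]
  refine ⟨?_, fun hj => ?_⟩
  · rintro ⟨i, rfl⟩ l
    exact (heckeMatrix_range hp a _).1 ⟨_, rfl⟩
  · choose x hx using fun l => (heckeMatrix_range hp a _).2 (hj l)
    refine ⟨⟨x, ?_⟩, Subtype.ext (funext hx)⟩
    refine LinearIndependent.of_comp (heckeMatrix hp a).mulVecLin ?_
    rw [show (heckeMatrix hp a).mulVecLin ∘ x = j.1 from funext hx]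
    exact j.2

variable [NeZero n]

/-- The average over index `p` sublattices of the number of points of `S`. -/
lemma lintegral_heckeFamily_pointMeasure (g : SLR n) {S : Set (Fin k → Fin n → ℝ)}
    (hS : MeasurableSet S) :
    ∫⁻ y, pointMeasure (tupleFamily n k) y S ∂pointMeasure (heckeFamily hp) (g : Xn n) =
      ∑' j : IndepTuple n k, S.indicator 1 (heckeScale n p • tupleMap g.1 (realTuple j.1)) *
        (annihilatorCount p j.1 : ℝ≥0∞) := by
  have := Fact.mk hp
  let f : IndepTuple n k → ℝ≥0∞ := fun j =>
    S.indicator 1 (heckeScale n p • tupleMap g.1 (realTuple j.1))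
  have hF : Measurable fun y : Xn n => pointMeasure (tupleFamily n k) y S :=
    (Measure.measurable_coe hS).comp
      (measurable_pointMeasure isPermutedBy_tupleFamily measurable_tupleFamily)
  rw [lintegral_heckeFamily_mk hp g hF]
  calc ∑' a, pointMeasure (tupleFamily n k) ((g * heckePoint hp a : SLR n) : Xn n) S
      = ∑' a, ∑' i, f (heckeTuple hp a i) := tsum_congr fun a => by
        rw [pointMeasure_mk_apply isPermutedBy_tupleFamily _ hS]
        refine tsum_congr fun i => congr_arg (S.indicator 1) ?_
        exact tupleMap_mul_realTuple g.1 _ _ i.1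
    _ = ∑' a, ∑' j, (Set.range (heckeTuple hp a)).indicator f j := tsum_congr fun a => by
        rw [← tsum_subtype]
        exact (tsum_range f (heckeTuple_injective hp a)).symm
    _ = ∑' j, ∑' a, (Set.range (heckeTuple hp a)).indicator f j := ENNReal.tsum_comm
    _ = ∑' j : IndepTuple n k, f j * (annihilatorCount p j.1 : ℝ≥0∞) := tsum_congr fun j => by
        have h : annihilatorCount p j.1 =
            Nat.card {a : {a : Fin n → ZMod p // a ≠ 0} | (modMatrix p j.1).mulVec a.1 = 0} :=
          Nat.card_congr (Equiv.subtypeSubtypeEquivSubtypeInter _ _).symm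
        rw [h, ← tsum_indicator_one_eq_natCard, ← ENNReal.tsum_mul_left]
        refine tsum_congr fun a => ?_
        by_cases ha : a ∈ {a : {a : Fin n → ZMod p // a ≠ 0} | (modMatrix p j.1).mulVec a.1 = 0}
        · rw [Set.indicator_of_mem ((mem_range_heckeTuple hp a).2 ha), Set.indicator_of_mem ha]
          simp
        · rw [Set.indicator_of_notMem (mt (mem_range_heckeTuple hp a).1 ha),
            Set.indicator_of_notMem ha, mul_zero]

end TupleFamily

section HeckeMean

variable {n k : ℕ}

lemma continuous_tupleMap (M : Matrix (Fin n) (Fin n) ℝ) :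
    Continuous (tupleMap M : (Fin k → Fin n → ℝ) → _) :=
  continuous_pi fun l => continuous_const.matrix_mulVec (continuous_apply l)

lemma smul_tupleMap (c : ℝ) (M : Matrix (Fin n) (Fin n) ℝ) (y : Fin k → Fin n → ℝ) :
    c • tupleMap M y = tupleMap M (c • y) :=
  funext fun l => (Matrix.mulVec_smul M c (y l)).symm

lemma isCompact_preimage_tupleMap (g : SLR n) {S : Set (Fin k → Fin n → ℝ)} (hS : IsCompact S) :
    IsCompact (tupleMap g.1 ⁻¹' S) := by
  have h : ∀ g₁ g₂ : SLR n, g₁ * g₂ = 1 → ∀ y : Fin k → Fin n → ℝ,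
      tupleMap g₁.1 (tupleMap g₂.1 y) = y := fun g₁ g₂ hg y => by
    have h1 : g₁.1 * g₂.1 = 1 := congr_arg Subtype.val hg
    ext l : 1
    simp only [tupleMap]
    rw [Matrix.mulVec_mulVec, h1, Matrix.one_mulVec]
  rw [← Set.image_eq_preimage_of_inverse (f := tupleMap (g⁻¹).1)
    (h g g⁻¹ (mul_inv_cancel g)) (h g⁻¹ g (inv_mul_cancel g))]
  exact hS.image (continuous_tupleMap _)

lemma volume_preimage_tupleMap (g : SLR n) {S : Set (Fin k → Fin n → ℝ)} (hS : MeasurableSet S) :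
    volume (tupleMap g.1 ⁻¹' S) = volume S := by
  have h : MeasurePreserving (fun y : Fin n → ℝ => g.1.mulVec y) volume volume := by
    refine ⟨(continuous_const.matrix_mulVec continuous_id).measurable, ?_⟩
    have := Real.map_matrix_volume_pi_eq_smul_volume_pi (M := g.1) (by rw [g.2]; exact one_ne_zero)
    rw [g.2] at this
    rw [show (fun y : Fin n → ℝ => g.1.mulVec y) = Matrix.toLin' g.1 from rfl, this]
    simp
  exact (volume_preserving_pi fun _ : Fin k => h).measure_preimage hS.nullMeasurableSet

lemma tendsto_heckeScale [NeZero n] : Tendsto (heckeScale n) atTop (𝓝 0) := by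
  have h : Tendsto (fun x : ℝ => x ^ ((n : ℝ)⁻¹)) (𝓝 0) (𝓝 (0 ^ ((n : ℝ)⁻¹))) :=
    (Real.continuousAt_rpow_const _ _ (Or.inr (by positivity))).tendsto
  rw [Real.zero_rpow (inv_ne_zero (Nat.cast_ne_zero.2 (NeZero.ne n)))] at h
  exact h.comp tendsto_inv_atTop_nhds_zero_nat

lemma ofReal_heckeScale_pow [NeZero n] {p : ℕ} (hp : p.Prime) (k : ℕ) :
    ENNReal.ofReal (heckeScale n p) ^ (k * n) = ((p : ℝ≥0∞) ^ k)⁻¹ := by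
  rw [mul_comm, pow_mul, ← ENNReal.ofReal_pow (heckeScale_pos hp).le, heckeScale_pow,
    ENNReal.ofReal_inv_of_pos (Nat.cast_pos.2 hp.pos), ENNReal.ofReal_natCast, ENNReal.inv_pow]

lemma covectorCount_add_one [NeZero n] {p : ℕ} (hp : p.Prime) :
    (covectorCount n p : ℝ≥0∞) + 1 = (p : ℝ≥0∞) ^ n := by
  have := covectorCount_pos (n := n) hp
  rw [covectorCount] at this ⊢
  have h : p ^ n - 1 + 1 = p ^ n := by omega
  exact_mod_cast h

lemma tendsto_nth_prime : Tendsto (Nat.nth Nat.Prime) atTop atTop :=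
  (Nat.nth_strictMono Nat.infinite_setOfPred_prime).tendsto_atTop

lemma tendsto_covectorCount_inv_mul [NeZero n] :
    Tendsto (fun m => (covectorCount n (Nat.nth Nat.Prime m) : ℝ≥0∞)⁻¹ *
      (Nat.nth Nat.Prime m : ℝ≥0∞) ^ n) atTop (𝓝 1) := by
  have hN : Tendsto (covectorCount n) atTop atTop :=
    (tendsto_sub_atTop_nat 1).comp (tendsto_pow_atTop (NeZero.ne n))
  have h := (ENNReal.tendsto_inv_nat_nhds_zero.comp (hN.comp tendsto_nth_prime)).const_add 1
  rw [add_zero] at h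
  refine h.congr fun m => ?_
  have hp := Nat.prime_nth_prime m
  rw [← covectorCount_add_one hp, mul_add, mul_one, ENNReal.inv_mul_cancel
    (Nat.cast_ne_zero.2 (covectorCount_pos hp).ne') (ENNReal.natCast_ne_top _)]
  rfl

/-- The average over index `p` sublattices of the number of linearly independent tuples in `S`. -/
noncomputable def heckeMean [NeZero n] {p : ℕ} (hp : p.Prime) (S : Set (Fin k → Fin n → ℝ))
    (x : Xn n) : ℝ≥0∞ :=
  (covectorCount n p : ℝ≥0∞)⁻¹ *
    ∫⁻ y, pointMeasure (tupleFamily n k) y S ∂pointMeasure (heckeFamily hp) x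

lemma measurable_pointMeasure_tupleFamily {S : Set (Fin k → Fin n → ℝ)} (hS : MeasurableSet S) :
    Measurable fun y : Xn n => pointMeasure (tupleFamily n k) y S :=
  (Measure.measurable_coe hS).comp
    (measurable_pointMeasure isPermutedBy_tupleFamily measurable_tupleFamily)

variable [NeZero n] {p : ℕ} (hp : p.Prime)

lemma measurable_heckeMean {S : Set (Fin k → Fin n → ℝ)} (hS : MeasurableSet S) :
    Measurable (heckeMean hp S) := by
  have := Fact.mk hp
  exact (measurable_lintegral_pointMeasure (isPermutedBy_heckeFamily hp) (measurable_heckeFamily hp)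
    (measurable_pointMeasure_tupleFamily hS)).const_mul _

lemma heckeMean_mk (g : SLR n) {S : Set (Fin k → Fin n → ℝ)} (hS : MeasurableSet S) :
    heckeMean hp S (g : Xn n) = (covectorCount n p : ℝ≥0∞)⁻¹ * ∑' j : IndepTuple n k,
      (tupleMap g.1 ⁻¹' S).indicator 1 (heckeScale n p • realTuple j.1) *
        (annihilatorCount p j.1 : ℝ≥0∞) := by
  rw [heckeMean, lintegral_heckeFamily_pointMeasure hp g hS]
  simp_rw [smul_tupleMap]
  rfl

lemma eventually_heckeMean_le (hind : IndependentModLargePrimes n k) (hkn : k < n) (g : SLR n)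
    {S : Set (Fin k → Fin n → ℝ)} (hS : IsCompact S) :
    ∀ᶠ p in atTop, ∀ hp : p.Prime, heckeMean hp S (g : Xn n) ≤
      (covectorCount n p : ℝ≥0∞)⁻¹ * (p : ℝ≥0∞) ^ n *
        volume (Metric.cthickening (heckeScale n p) (tupleMap g.1 ⁻¹' S)) := by
  set T := tupleMap g.1 ⁻¹' S
  obtain ⟨R, hR⟩ := (isCompact_preimage_tupleMap g hS).isBounded.subset_closedBall 0
  have hlim : Tendsto (fun p => 2 * R ^ k * heckeScale n p ^ (n - k)) atTop (𝓝 0) := by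
    have := ((tendsto_heckeScale (n := n)).pow (n - k)).const_mul (2 * R ^ k)
    rwa [zero_pow (by omega), mul_zero] at this
  filter_upwards [hlim.eventually_lt_const one_pos] with p hpR hp
  set c := heckeScale n p
  have hc : 0 < c := heckeScale_pos hp
  have hann : ∀ j : IndepTuple n k, c • realTuple j.1 ∈ T → annihilatorCount p j.1 ≤ p ^ (n - k) :=
    fun j hj => by
      refine annihilatorCount_le hp (hind j.1 p (R / c) hp j.2 (fun l i => ?_) ?_)
      · have h1 : ‖c • realTuple j.1‖ ≤ R := by simpa using hR hj
        rw [le_div_iff₀ hc, mul_comm]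
        calc c * |(j.1 l i : ℝ)| = ‖(c • realTuple j.1) l i‖ := by
              simp [realTuple, abs_of_pos hc]
          _ ≤ ‖c • realTuple j.1‖ := (norm_le_pi_norm _ i).trans (norm_le_pi_norm _ l)
          _ ≤ R := h1
      · have h1 : c ^ k * c ^ (n - k) * p = 1 := by
          rw [← pow_add, Nat.add_sub_cancel' hkn.le, heckeScale_pow,
            inv_mul_cancel₀ (Nat.cast_ne_zero.2 hp.ne_zero)]
        rw [div_pow, ← mul_div_assoc, div_lt_iff₀ (pow_pos hc k)]
        have h2 : 0 < c ^ (n - k) := pow_pos hc _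
        refine lt_of_mul_lt_mul_right ?_ h2.le
        linarith
  rw [heckeMean_mk hp g hS.measurableSet, mul_assoc]
  gcongr
  calc _ ≤ ∑' j : IndepTuple n k, T.indicator 1 (c • realTuple j.1) * (p : ℝ≥0∞) ^ (n - k) := by
        refine ENNReal.tsum_le_tsum fun j => ?_
        by_cases hj : c • realTuple j.1 ∈ T
        · gcongr
          exact_mod_cast hann j hj
        · rw [Set.indicator_of_notMem hj, zero_mul, zero_mul]
    _ ≤ tupleCount c T * (p : ℝ≥0∞) ^ (n - k) := by
        rw [ENNReal.tsum_mul_right]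
        gcongr
        exact ENNReal.tsum_comp_le_tsum_of_injective Subtype.val_injective _
    _ = (p : ℝ≥0∞) ^ n * (ENNReal.ofReal c ^ (k * n) * tupleCount c T) := by
        have hp0 : (p : ℝ≥0∞) ^ k ≠ 0 := pow_ne_zero _ (Nat.cast_ne_zero.2 hp.ne_zero)
        have hp1 : (p : ℝ≥0∞) ^ k ≠ ∞ := ENNReal.pow_ne_top (ENNReal.natCast_ne_top p)
        have hpow : (p : ℝ≥0∞) ^ n = p ^ (n - k) * p ^ k := by
          rw [← pow_add, Nat.sub_add_cancel hkn.le]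
        rw [ofReal_heckeScale_pow hp, hpow, ← mul_assoc, mul_assoc (_ ^ (n - k)),
          ENNReal.mul_inv_cancel hp0 hp1, mul_one, mul_comm]
    _ ≤ _ := by
        gcongr
        exact tupleCount_le hc T

/-- Averaging over index `p` sublattices gives at most the volume in the limit. -/
lemma limsup_heckeMean_le (hind : IndependentModLargePrimes n k) (hkn : k < n) (x : Xn n)
    {S : Set (Fin k → Fin n → ℝ)} (hS : IsCompact S) :
    limsup (fun m => heckeMean (Nat.prime_nth_prime m) S x) atTop ≤ volume S := by
  induction x using QuotientGroup.induction_on with | H g => ?_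
  have hT := isCompact_preimage_tupleMap g hS
  have hlim : Tendsto (fun m => (covectorCount n (Nat.nth Nat.Prime m) : ℝ≥0∞)⁻¹ *
      (Nat.nth Nat.Prime m : ℝ≥0∞) ^ n * volume (Metric.cthickening
        (heckeScale n (Nat.nth Nat.Prime m)) (tupleMap g.1 ⁻¹' S))) atTop (𝓝 (1 * volume S)) := by
    rw [← volume_preimage_tupleMap g hS.measurableSet]
    exact ENNReal.Tendsto.mul tendsto_covectorCount_inv_mul (Or.inl one_ne_zero)
      ((tendsto_measure_cthickening_of_isCompact hT).comp
        (tendsto_heckeScale.comp tendsto_nth_prime)) (Or.inr ENNReal.one_ne_top)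
  rw [one_mul] at hlim
  rw [← Tendsto.limsup_eq hlim]
  refine limsup_le_limsup ?_
  filter_upwards [tendsto_nth_prime.eventually (eventually_heckeMean_le hind hkn g hS)] with m hm
  exact hm _

end HeckeMean

section SiegelRogers

variable {n k : ℕ}

/-- The intensity of the linearly independent `k`-tuples of vectors of a random lattice. -/
noncomputable def tupleIntensity (k : ℕ) (μ : Measure (Xn n)) : Measure (Fin k → Fin n → ℝ) :=
  μ.bind (pointMeasure (tupleFamily n k))

lemma tupleIntensity_apply (μ : Measure (Xn n)) {S : Set (Fin k → Fin n → ℝ)}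
    (hS : MeasurableSet S) :
    tupleIntensity k μ S = ∫⁻ x, pointMeasure (tupleFamily n k) x S ∂μ :=
  Measure.bind_apply hS
    (measurable_pointMeasure isPermutedBy_tupleFamily measurable_tupleFamily).aemeasurable

lemma tsum_le_tsum_indepTuple_one_add_one (f : (Fin 1 → Fin n → ℤ) → ℝ≥0∞) (hf : f 0 ≤ 1) :
    ∑' j, f j ≤ ∑' j : IndepTuple n 1, f j.1 + 1 := by
  calc ∑' j, f j
      ≤ ∑' j, ({j | LinearIndependent ℤ j}.indicator f j + if j = 0 then 1 else 0) := by
        refine ENNReal.tsum_le_tsum fun j => ?_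
        by_cases hj : j = 0
        · rw [if_pos hj, hj]
          exact le_add_left hf
        · have h : j ∈ {j : Fin 1 → Fin n → ℤ | LinearIndependent ℤ j} :=
            linearIndependent_fin_one_iff.2 fun h =>
              hj (funext fun l => by rwa [Fin.fin_one_eq_zero l])
          rw [Set.indicator_of_mem h]
          exact le_self_add
    _ = _ := by
        rw [ENNReal.tsum_add, tsum_ite_eq, ← tsum_subtype]
        rfl

variable [NeZero n]

lemma lintegral_min_le_heckeMean {p : ℕ} (hp : p.Prime) (μ : Measure (Xn n))
    [IsProbabilityMeasure μ] [SMulInvariantMeasure (SLR n) (Xn n) μ]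
    {S : Set (Fin k → Fin n → ℝ)} (hS : MeasurableSet S)
    (L : ℝ≥0∞) :
    ∫⁻ x, min (pointMeasure (tupleFamily n k) x S) L ∂μ ≤ ∫⁻ x, min (heckeMean hp S x) L ∂μ := by
  rw [lintegral_eq_heckeAverage hp μ
    ((measurable_pointMeasure_tupleFamily hS).min measurable_const)]
  refine lintegral_mono fun x => le_min ?_ ?_
  · rw [heckeMean]
    gcongr
    exact min_le_left _ _
  · calc _ ≤ (covectorCount n p : ℝ≥0∞)⁻¹ * ∫⁻ _, L ∂pointMeasure (heckeFamily hp) x := by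
          gcongr
          exact min_le_right _ _
      _ = L := by
          rw [lintegral_const, pointMeasure_heckeFamily_univ, mul_comm L, ← mul_assoc,
            ENNReal.inv_mul_cancel (Nat.cast_ne_zero.2 (covectorCount_pos hp).ne')
              (ENNReal.natCast_ne_top _), one_mul]

lemma lintegral_heckeMean {p : ℕ} (hp : p.Prime) (μ : Measure (Xn n)) [IsProbabilityMeasure μ]
    [SMulInvariantMeasure (SLR n) (Xn n) μ] {S : Set (Fin k → Fin n → ℝ)} (hS : MeasurableSet S) :
    ∫⁻ x, heckeMean hp S x ∂μ = tupleIntensity k μ S := by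
  rw [tupleIntensity_apply μ hS,
    lintegral_eq_heckeAverage hp μ (measurable_pointMeasure_tupleFamily hS)]
  rfl

variable (μ : Measure (Xn n)) [IsProbabilityMeasure μ] [SMulInvariantMeasure (SLR n) (Xn n) μ]

lemma tupleIntensity_le_of_isCompact (hind : IndependentModLargePrimes n k) (hkn : k < n)
    {S : Set (Fin k → Fin n → ℝ)} (hS : IsCompact S) : tupleIntensity k μ S ≤ volume S := by
  have hmeas := measurable_pointMeasure_tupleFamily hS.measurableSet
  have key : ∀ L : ℕ, ∫⁻ x, min (pointMeasure (tupleFamily n k) x S) L ∂μ ≤ volume S := fun L => by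
    let f : ℕ → Xn n → ℝ≥0∞ := fun m x => min (heckeMean (Nat.prime_nth_prime m) S x) L
    calc _ ≤ limsup (fun m => ∫⁻ x, f m x ∂μ) atTop :=
          le_limsup_of_frequently_le (Frequently.of_forall fun m =>
            lintegral_min_le_heckeMean (Nat.prime_nth_prime m) μ hS.measurableSet L)
      _ ≤ ∫⁻ x, limsup (fun m => f m x) atTop ∂μ := by
          refine limsup_lintegral_le (fun _ => (L : ℝ≥0∞))
            (fun m => (measurable_heckeMean _ hS.measurableSet).min measurable_const)
            (fun m => Eventually.of_forall fun x => min_le_right _ _) ?_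
          simp
      _ ≤ ∫⁻ _, volume S ∂μ := lintegral_mono fun x =>
          (limsup_le_limsup (Eventually.of_forall fun m => min_le_left _ _)).trans
            (limsup_heckeMean_le hind hkn x hS)
      _ = volume S := by rw [lintegral_const, measure_univ, mul_one]
  rw [tupleIntensity_apply μ hS.measurableSet]
  have hsup : ∀ x : Xn n, pointMeasure (tupleFamily n k) x S =
      ⨆ L : ℕ, min (pointMeasure (tupleFamily n k) x S) (L : ℝ≥0∞) := fun x => by
    have := inf_iSup_eq (pointMeasure (tupleFamily n k) x S) fun L : ℕ => (L : ℝ≥0∞)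
    rw [ENNReal.iSup_natCast, inf_top_eq] at this
    exact this
  rw [lintegral_congr hsup, lintegral_iSup (fun L => hmeas.min measurable_const)
    fun L L' h x => min_le_min_left _ (Nat.cast_le.2 h)]
  exact iSup_le key

lemma isFiniteMeasureOnCompacts_tupleIntensity (hind : IndependentModLargePrimes n k)
    (hkn : k < n) : IsFiniteMeasureOnCompacts (tupleIntensity k μ) :=
  ⟨fun _ hK => (tupleIntensity_le_of_isCompact μ hind hkn hK).trans_lt hK.measure_lt_top⟩

/-- The expected number of linearly independent tuples in `S` is at most the volume of `S`. -/
theorem tupleIntensity_le (hind : IndependentModLargePrimes n k) (hkn : k < n)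
    {S : Set (Fin k → Fin n → ℝ)} (hS : MeasurableSet S) : tupleIntensity k μ S ≤ volume S := by
  have := isFiniteMeasureOnCompacts_tupleIntensity μ hind hkn
  rw [hS.measure_eq_iSup_isCompact]
  exact iSup₂_le fun K hKS => iSup_le fun hK =>
    (tupleIntensity_le_of_isCompact μ hind hkn hK).trans (measure_mono hKS)

lemma le_heckeMean {p : ℕ} (hp : p.Prime) (hn : 2 ≤ n) (g : SLR n)
    {K : Set (Fin 1 → Fin n → ℝ)} {U : Set (Fin 1 → Fin n → ℝ)} (hU : MeasurableSet U)
    (h : Metric.cthickening (heckeScale n p) K ⊆ tupleMap g.1 ⁻¹' U) :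
    (1 - (covectorCount n p : ℝ≥0∞)⁻¹ * (p : ℝ≥0∞) ^ n * (p : ℝ≥0∞)⁻¹) *
      (volume K - (p : ℝ≥0∞)⁻¹) ≤ heckeMean hp U (g : Xn n) := by
  set c := heckeScale n p
  set T := tupleMap g.1 ⁻¹' U
  have hp0 : (p : ℝ≥0∞) ≠ 0 := Nat.cast_ne_zero.2 hp.ne_zero
  have hp1 : (p : ℝ≥0∞) ≠ ∞ := ENNReal.natCast_ne_top p
  have hN0 : (covectorCount n p : ℝ≥0∞) ≠ 0 := Nat.cast_ne_zero.2 (covectorCount_pos hp).ne'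
  have hN1 : (covectorCount n p : ℝ≥0∞) ≠ ∞ := ENNReal.natCast_ne_top _
  have hcount : volume K - (p : ℝ≥0∞)⁻¹ ≤
      (p : ℝ≥0∞)⁻¹ * ∑' j : IndepTuple n 1, T.indicator 1 (c • realTuple j.1) := by
    rw [tsub_le_iff_right]
    calc volume K ≤ (p : ℝ≥0∞)⁻¹ * tupleCount c T := by
          have := le_tupleCount (heckeScale_pos (n := n) hp) h
          rwa [ofReal_heckeScale_pow hp, pow_one] at this
      _ ≤ (p : ℝ≥0∞)⁻¹ * (∑' j : IndepTuple n 1, T.indicator 1 (c • realTuple j.1) + 1) := by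
          gcongr
          exact tsum_le_tsum_indepTuple_one_add_one (fun j => T.indicator 1 (c • realTuple j))
            (Set.indicator_le_self' (fun _ _ => zero_le) _)
      _ = _ := by rw [mul_add, mul_one]
  have hfactor : 1 - (covectorCount n p : ℝ≥0∞)⁻¹ * (p : ℝ≥0∞) ^ n * (p : ℝ≥0∞)⁻¹ ≤
      (covectorCount n p : ℝ≥0∞)⁻¹ * ((p ^ (n - 1) - 1 : ℕ) : ℝ≥0∞) * p := by
    rw [tsub_le_iff_right, ← ENNReal.inv_mul_cancel hN0 hN1, mul_assoc, mul_assoc, ← mul_add]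
    gcongr
    have hpow : (p : ℝ≥0∞) ^ n = (p : ℝ≥0∞) ^ (n - 1) * p := by
      rw [← pow_succ, Nat.sub_add_cancel (by omega)]
    rw [hpow, mul_assoc, ENNReal.mul_inv_cancel hp0 hp1, mul_one]
    have h1 : p ^ n = p ^ (n - 1) * p := by rw [← pow_succ, Nat.sub_add_cancel (by omega)]
    have h2 : p ≤ p ^ (n - 1) := Nat.le_self_pow (by omega) p
    have h3 : covectorCount n p ≤ (p ^ (n - 1) - 1) * p + p ^ (n - 1) := by
      rw [covectorCount, h1, Nat.sub_mul, one_mul]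
      have : p ≤ p ^ (n - 1) * p := Nat.le_mul_of_pos_left p (pow_pos hp.pos _)
      omega
    exact_mod_cast h3
  rw [heckeMean_mk hp g hU]
  calc _ ≤ ((covectorCount n p : ℝ≥0∞)⁻¹ * ((p ^ (n - 1) - 1 : ℕ) : ℝ≥0∞) * p) *
        ((p : ℝ≥0∞)⁻¹ * ∑' j : IndepTuple n 1, T.indicator 1 (c • realTuple j.1)) :=
        mul_le_mul' hfactor hcount
    _ = (covectorCount n p : ℝ≥0∞)⁻¹ * ∑' j : IndepTuple n 1,
          T.indicator 1 (c • realTuple j.1) * ((p ^ (n - 1) - 1 : ℕ) : ℝ≥0∞) := by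
        rw [ENNReal.tsum_mul_right, mul_assoc, ← mul_assoc (p : ℝ≥0∞),
          ENNReal.mul_inv_cancel hp0 hp1, one_mul, mul_assoc, mul_comm (∑' _, _)]
    _ ≤ _ := by
        gcongr with j
        have := le_annihilatorCount hp j.1
        omega

lemma volume_le_tupleIntensity_of_isCompact (hn : 2 ≤ n) {K U : Set (Fin 1 → Fin n → ℝ)}
    (hK : IsCompact K) (hU : IsOpen U) (hKU : K ⊆ U) : volume K ≤ tupleIntensity 1 μ U := by
  let f : ℕ → Xn n → ℝ≥0∞ := fun m => heckeMean (Nat.prime_nth_prime m) U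
  have hinv : Tendsto (fun m => (Nat.nth Nat.Prime m : ℝ≥0∞)⁻¹) atTop (𝓝 0) :=
    ENNReal.tendsto_inv_nat_nhds_zero.comp tendsto_nth_prime
  have hpt : ∀ x, volume K ≤ liminf (fun m => f m x) atTop := fun x => by
    induction x using QuotientGroup.induction_on with | H g => ?_
    obtain ⟨δ, hδ, hδU⟩ := (isCompact_preimage_tupleMap g hK).exists_cthickening_subset_open
      (hU.preimage (continuous_tupleMap g.1)) (Set.preimage_mono hKU)
    have hlim : Tendsto (fun m => (1 - (covectorCount n (Nat.nth Nat.Prime m) : ℝ≥0∞)⁻¹ *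
        (Nat.nth Nat.Prime m : ℝ≥0∞) ^ n * (Nat.nth Nat.Prime m : ℝ≥0∞)⁻¹) *
          (volume K - (Nat.nth Nat.Prime m : ℝ≥0∞)⁻¹)) atTop
        (𝓝 ((1 - 1 * 0) * (volume K - 0))) := by
      refine ENNReal.Tendsto.mul (ENNReal.Tendsto.sub tendsto_const_nhds (ENNReal.Tendsto.mul
        tendsto_covectorCount_inv_mul (Or.inl one_ne_zero) hinv (Or.inr ENNReal.one_ne_top))
        (Or.inl ENNReal.one_ne_top)) (Or.inl (by simp)) (ENNReal.Tendsto.sub tendsto_const_nhds hinv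
        (Or.inr ENNReal.zero_ne_top)) (Or.inr (by simp))
    rw [mul_zero, tsub_zero, tsub_zero, one_mul] at hlim
    rw [← hlim.liminf_eq]
    refine liminf_le_liminf ?_
    filter_upwards [(tendsto_heckeScale (n := n).comp tendsto_nth_prime).eventually_le_const hδ]
      with m hm
    rw [← volume_preimage_tupleMap g hK.measurableSet]
    exact le_heckeMean _ hn g hU.measurableSet ((Metric.cthickening_mono hm _).trans hδU)
  calc volume K = ∫⁻ _, volume K ∂μ := by rw [lintegral_const, measure_univ, mul_one]
    _ ≤ ∫⁻ x, liminf (fun m => f m x) atTop ∂μ := lintegral_mono hpt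
    _ ≤ liminf (fun m => ∫⁻ x, f m x ∂μ) atTop :=
        lintegral_liminf_le fun m => measurable_heckeMean _ hU.measurableSet
    _ = tupleIntensity 1 μ U := by
        simp_rw [f, lintegral_heckeMean _ μ hU.measurableSet]
        exact liminf_const _

/-- **Siegel's mean value theorem**: the intensity of the nonzero vectors of a random lattice is
Lebesgue measure. -/
theorem tupleIntensity_one (hn : 2 ≤ n) : tupleIntensity 1 μ = volume := by
  have := isFiniteMeasureOnCompacts_tupleIntensity μ independentModLargePrimes_one (by omega)
  refine Measure.ext fun S hS =>
    (tupleIntensity_le μ independentModLargePrimes_one (by omega) hS).antisymm ?_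
  rw [S.measure_eq_iInf_isOpen (tupleIntensity 1 μ)]
  refine le_iInf₂ fun U hSU => le_iInf fun hU => (measure_mono hSU).trans ?_
  have : (volume : Measure (Fin 1 → Fin n → ℝ)).Regular :=
    Measure.Regular.of_sigmaCompactSpace_of_isLocallyFiniteMeasure _
  rw [hU.measure_eq_iSup_isCompact]
  exact iSup₂_le fun K hKU => iSup_le fun hK => volume_le_tupleIntensity_of_isCompact μ hn hK hU hKU

end SiegelRogers

section DependentPairs

variable {n : ℕ}

lemma Int.exists_units_mul_natCast_succ {z : ℤ} (hz : z ≠ 0) :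
    ∃ (s : ℤˣ) (l : ℕ), z = s * (l + 1) := by
  obtain ⟨l, hl⟩ := Nat.exists_eq_succ_of_ne_zero (Int.natAbs_ne_zero.2 hz)
  rcases Int.natAbs_eq z with h | h
  · exact ⟨1, l, by rw [h, hl]; simp⟩
  · exact ⟨-1, l, by rw [h, hl]; simp⟩

/-- Linearly dependent nonzero integral vectors are multiples of the same integral vector. -/
lemma exists_common_multiple {j : Fin 2 → Fin n → ℤ} (hj : ¬LinearIndependent ℤ j) (h0 : j 0 ≠ 0)
    (h1 : j 1 ≠ 0) : ∃ (k l : ℕ) (s : ℤˣ) (u : Fin n → ℤ),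
      j 0 = ((k : ℤ) + 1) • u ∧ j 1 = ((s : ℤ) * (l + 1)) • u := by
  rw [linearIndependent_fin_two_iff] at hj
  push Not at hj
  obtain ⟨a, b, hab, hne⟩ := hj
  have ha : a ≠ 0 := fun h => by
    rw [h, zero_smul, zero_add] at hab
    exact (smul_eq_zero.1 hab).elim (hne h) h1
  have hb : b ≠ 0 := fun h => by
    rw [h, zero_smul, add_zero] at hab
    exact (smul_eq_zero.1 hab).elim ha h0
  obtain ⟨a', b', hcop, ha', hb'⟩ := Int.exists_gcd_one (Int.gcd_pos_of_ne_zero_left b ha)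
  have hd : (Int.gcd a b : ℤ) ≠ 0 := fun h => ha (by rw [ha', h, mul_zero])
  have hrel : ∀ i, a' * j 0 i = -(b' * j 1 i) := fun i => by
    have h := congr_fun hab i
    simp only [Pi.add_apply, Pi.smul_apply, smul_eq_mul, Pi.zero_apply] at h
    refine mul_left_cancel₀ hd ?_
    linear_combination h - j 0 i * ha' - j 1 i * hb'
  have hb0 : b' ≠ 0 := fun h => hb (by rw [hb', h, zero_mul])
  have ha0 : a' ≠ 0 := fun h => ha (by rw [ha', h, zero_mul])
  have hdvd : ∀ i, b' ∣ j 0 i := fun i => by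
    refine (Int.isCoprime_iff_gcd_eq_one.2 hcop).symm.dvd_of_dvd_mul_left (z := j 0 i) ?_
    rw [hrel i]
    exact (dvd_mul_right _ _).neg_right
  choose t ht using hdvd
  obtain ⟨s, k, hs⟩ := Int.exists_units_mul_natCast_succ hb0
  obtain ⟨s', l, hs'⟩ := Int.exists_units_mul_natCast_succ (z := -(a' * s)) (by simp [ha0])
  have hss : (s : ℤ) * s = 1 := by
    rw [← Units.val_mul, Int.units_mul_self, Units.val_one]
  refine ⟨k, l, s', fun i => s * t i, funext fun i => ?_, funext fun i => ?_⟩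
  · simp only [Pi.smul_apply, smul_eq_mul]
    rw [ht, hs]
    ring
  · simp only [Pi.smul_apply, smul_eq_mul]
    rw [← hs']
    have h := hrel i
    rw [ht] at h
    refine mul_left_cancel₀ hb0 ?_
    linear_combination h + a' * b' * t i * hss

end DependentPairs

section VectorCount

variable {n : ℕ}

/-- The number of nonzero vectors of a lattice in `A`. -/
noncomputable def vectorCount (A : Set (Fin n → ℝ)) (x : Xn n) : ℝ≥0∞ :=
  pointMeasure (tupleFamily n 1) x {y | y 0 ∈ A}

lemma measurableSet_fin_one {A : Set (Fin n → ℝ)} (hA : MeasurableSet A) :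
    MeasurableSet {y : Fin 1 → Fin n → ℝ | y 0 ∈ A} :=
  measurable_pi_apply 0 hA

lemma volume_fin_one (A : Set (Fin n → ℝ)) :
    volume {y : Fin 1 → Fin n → ℝ | y 0 ∈ A} = volume A := by
  have : {y : Fin 1 → Fin n → ℝ | y 0 ∈ A} = Set.univ.pi fun _ => A := by
    ext y
    simp
  rw [this, volume_pi_pi]
  simp

lemma vectorCount_mk {A : Set (Fin n → ℝ)} (hA : MeasurableSet A) (g : SLR n) :
    vectorCount A (g : Xn n) =
      ∑' j : IndepTuple n 1, A.indicator 1 (g.1.mulVec (realTuple j.1 0)) := by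
  rw [vectorCount, pointMeasure_mk_apply isPermutedBy_tupleFamily g (measurableSet_fin_one hA)]
  rfl

lemma vectorCount_mk_eq_encard {A : Set (Fin n → ℝ)} (hA : MeasurableSet A) (g : SLR n) :
    vectorCount A (g : Xn n) = (nonzeroLatticePts g A).encard := by
  let e : IndepTuple n 1 ≃ {x : Fin n → ℤ // x ≠ 0} :=
    (Equiv.funUnique (Fin 1) (Fin n → ℤ)).subtypeEquiv fun _ => linearIndependent_fin_one_iff
  rw [vectorCount_mk hA, ← ENNReal.tsum_set_one]
  calc _ = ∑' x : {x : Fin n → ℤ // x ≠ 0},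
        A.indicator (1 : (Fin n → ℝ) → ℝ≥0∞) (g.1.mulVec fun i => (x.1 i : ℝ)) :=
        e.tsum_eq fun x => A.indicator (1 : (Fin n → ℝ) → ℝ≥0∞) (g.1.mulVec fun i => (x.1 i : ℝ))
    _ = ∑' x : Fin n → ℤ, (nonzeroLatticePts g A).indicator (fun _ => (1 : ℝ≥0∞)) x := by
        refine (tsum_subtype {x : Fin n → ℤ | x ≠ 0} fun x =>
          A.indicator (1 : (Fin n → ℝ) → ℝ≥0∞) (g.1.mulVec fun i => (x i : ℝ))).trans ?_
        refine tsum_congr fun x => ?_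
        by_cases hx : x = 0 <;> by_cases hgx : g.1.mulVec (fun i => (x i : ℝ)) ∈ A <;>
          simp [nonzeroLatticePts, hx, hgx]
    _ = _ := (tsum_subtype _ _).symm

/-- The number of nonzero vectors `u` of a lattice with `a u ∈ A` and `b u ∈ A`. -/
noncomputable def multipleCount (A : Set (Fin n → ℝ)) (a b : ℝ) (x : Xn n) : ℝ≥0∞ :=
  pointMeasure (tupleFamily n 1) x {y | a • y 0 ∈ A ∧ b • y 0 ∈ A}

lemma measurableSet_multiple {A : Set (Fin n → ℝ)} (hA : MeasurableSet A) (a b : ℝ) :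
    MeasurableSet {y : Fin 1 → Fin n → ℝ | a • y 0 ∈ A ∧ b • y 0 ∈ A} :=
  (((measurable_pi_apply 0).const_smul a) hA).inter (((measurable_pi_apply 0).const_smul b) hA)

lemma volume_multiple_le (A : Set (Fin n → ℝ)) {a b : ℝ} (ha : a ≠ 0) (hb : b ≠ 0) :
    volume {y : Fin 1 → Fin n → ℝ | a • y 0 ∈ A ∧ b • y 0 ∈ A} ≤
      min (ENNReal.ofReal (|a| ^ n)⁻¹) (ENNReal.ofReal (|b| ^ n)⁻¹) * volume A := by
  have h : ∀ c : ℝ, c ≠ 0 → volume {y : Fin 1 → Fin n → ℝ | c • y 0 ∈ A} =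
      ENNReal.ofReal (|c| ^ n)⁻¹ * volume A := fun c hc => by
    refine (volume_fin_one ((c • ·) ⁻¹' A)).trans ?_
    rw [Measure.addHaar_preimage_smul _ hc, Module.finrank_fin_fun, abs_inv, abs_pow]
  rcases le_total (ENNReal.ofReal (|a| ^ n)⁻¹) (ENNReal.ofReal (|b| ^ n)⁻¹) with hab | hab
  · rw [min_eq_left hab, ← h a ha]
    exact measure_mono fun y hy => hy.1
  · rw [min_eq_right hab, ← h b hb]
    exact measure_mono fun y hy => hy.2

/-- The square of the number of vectors in `A` counts independent pairs and dependent pairs. -/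
lemma vectorCount_sq_le {A : Set (Fin n → ℝ)} (hA : MeasurableSet A) (x : Xn n) :
    vectorCount A x ^ 2 ≤ pointMeasure (tupleFamily n 2) x (Set.univ.pi fun _ => A) +
      ∑' q : ℕ × ℕ × ℤˣ, multipleCount A (q.1 + 1) ((q.2.2 : ℤ) * (q.2.1 + 1)) x := by
  induction x using QuotientGroup.induction_on with | H g => ?_
  let f : (Fin n → ℤ) → ℝ≥0∞ := fun v => A.indicator 1 (g.1.mulVec fun i => (v i : ℝ))
  have hprod : ∀ {k : ℕ} {S : Set (Fin k → Fin n → ℝ)} {y : Fin k → Fin n → ℝ} {v w : Fin n → ℤ},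
      (y ∈ S ↔ g.1.mulVec (fun i => (v i : ℝ)) ∈ A ∧ g.1.mulVec (fun i => (w i : ℝ)) ∈ A) →
        S.indicator 1 y = f v * f w := fun {k S y v w} h => by
    by_cases hv : g.1.mulVec (fun i => (v i : ℝ)) ∈ A <;>
      by_cases hw : g.1.mulVec (fun i => (w i : ℝ)) ∈ A <;> simp [f, h, hv, hw]
  let pair : IndepTuple n 1 × IndepTuple n 1 → Fin 2 → Fin n → ℤ := fun q => ![q.1.1 0, q.2.1 0]
  let D : Set (IndepTuple n 1 × IndepTuple n 1) := {q | LinearIndependent ℤ (pair q)}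
  have hpair : Function.Injective pair := fun q q' h => by
    refine Prod.ext (Subtype.ext (funext fun l => ?_)) (Subtype.ext (funext fun l => ?_))
    · rw [Fin.fin_one_eq_zero l]
      exact congr_fun h 0
    · rw [Fin.fin_one_eq_zero l]
      exact congr_fun h 1
  have hsq : vectorCount A (g : Xn n) ^ 2 =
      ∑' q : IndepTuple n 1 × IndepTuple n 1, f (q.1.1 0) * f (q.2.1 0) := by
    rw [vectorCount_mk hA, sq, ENNReal.tsum_prod (f := fun i i' : IndepTuple n 1 =>
      f (i.1 0) * f (i'.1 0))]
    simp_rw [ENNReal.tsum_mul_left, ENNReal.tsum_mul_right]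
    rfl
  have hind : pointMeasure (tupleFamily n 2) (g : Xn n) (Set.univ.pi fun _ => A) =
      ∑' j : IndepTuple n 2, f (j.1 0) * f (j.1 1) := by
    rw [pointMeasure_mk_apply isPermutedBy_tupleFamily g (.univ_pi fun _ => hA)]
    refine tsum_congr fun j => ?_
    exact hprod (Set.mem_univ_pi.trans Fin.forall_fin_two)
  have hdep : ∀ q : ℕ × ℕ × ℤˣ,
      multipleCount A (q.1 + 1) ((q.2.2 : ℤ) * (q.2.1 + 1)) (g : Xn n) =
        ∑' u : IndepTuple n 1, f (((q.1 : ℤ) + 1) • u.1 0) *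
          f (((q.2.2 : ℤ) * (q.2.1 + 1)) • u.1 0) := fun q => by
    rw [multipleCount, pointMeasure_mk_apply isPermutedBy_tupleFamily g
      (measurableSet_multiple hA _ _)]
    refine tsum_congr fun j => ?_
    have h : ∀ z : ℤ, g.1.mulVec (fun i => ((z • j.1 0) i : ℝ)) =
        (z : ℝ) • tupleFamily n 1 g j 0 := fun z => by
      rw [tupleFamily, tupleMap, ← Matrix.mulVec_smul]
      congr 1
      ext i
      simp [realTuple]
    refine hprod ?_
    rw [h, h]
    push_cast
    rfl
  have hD : ∀ q : (Dᶜ : Set _), ∃ r : (ℕ × ℕ × ℤˣ) × IndepTuple n 1,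
      q.1.1.1 0 = ((r.1.1 : ℤ) + 1) • r.2.1 0 ∧
        q.1.2.1 0 = ((r.1.2.2 : ℤ) * (r.1.2.1 + 1)) • r.2.1 0 := fun q => by
    obtain ⟨k, l, s, u, h1, h2⟩ := exists_common_multiple q.2
      (linearIndependent_fin_one_iff.1 q.1.1.2) (linearIndependent_fin_one_iff.1 q.1.2.2)
    refine ⟨((k, l, s), ⟨fun _ => u, linearIndependent_fin_one_iff.2 fun hu => ?_⟩), h1, h2⟩
    refine linearIndependent_fin_one_iff.1 q.1.1.2 (h1.trans ?_)
    rw [show u = 0 from hu, smul_zero]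
  choose r hr1 hr2 using hD
  have hr : Function.Injective r := fun q q' h => by
    refine Subtype.ext (hpair ?_)
    change ![q.1.1.1 0, q.1.2.1 0] = ![q'.1.1.1 0, q'.1.2.1 0]
    rw [hr1, hr2, hr1 q', hr2 q', h]
  rw [hsq, hind, tsum_congr hdep, ← ENNReal.tsum_prod,
    ← ENNReal.summable.tsum_add_tsum_compl (s := D) ENNReal.summable]
  refine add_le_add ?_ ?_
  · exact ENNReal.tsum_comp_le_tsum_of_injective
      (f := fun q : D => (⟨pair q.1, q.2⟩ : IndepTuple n 2))
      (fun q q' h => Subtype.ext (hpair (congr_arg Subtype.val h)))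
      (fun j : IndepTuple n 2 => f (j.1 0) * f (j.1 1))
  · refine le_trans (le_of_eq (tsum_congr fun q => ?_))
      (ENNReal.tsum_comp_le_tsum_of_injective hr _)
    rw [hr1, hr2]

end VectorCount

section Zeta

lemma summable_zetaNat {m : ℕ} (hm : 2 ≤ m) : Summable fun k : ℕ => (((k : ℝ) + 1) ^ m)⁻¹ := by
  have h := (summable_nat_add_iff 1).2 (Real.summable_nat_pow_inv (p := m) |>.2 hm)
  exact_mod_cast h

lemma zetaNat_pos {m : ℕ} (hm : 2 ≤ m) : 0 < zetaNat m :=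
  (summable_zetaNat hm).tsum_pos (fun k => by positivity) 0 (by positivity)

lemma zetaNat_le_two {m : ℕ} (hm : 2 ≤ m) : zetaNat m ≤ 2 := by
  have h2 : zetaNat 2 = Real.pi ^ 2 / 6 := by
    have h := ((hasSum_nat_add_iff' 1).2 hasSum_zeta_two).tsum_eq
    simpa [zetaNat] using h
  calc zetaNat m ≤ zetaNat 2 := (summable_zetaNat hm).tsum_le_tsum (fun k => by
          gcongr
          · linarith [k.cast_nonneg (α := ℝ)]) (summable_zetaNat le_rfl)
    _ ≤ 2 := by
        rw [h2]
        nlinarith [Real.pi_lt_d2, Real.pi_pos]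

lemma tsum_ofReal_inv_pow {m : ℕ} (hm : 2 ≤ m) :
    ∑' k : ℕ, ENNReal.ofReal (((k : ℝ) + 1) ^ m)⁻¹ = ENNReal.ofReal (zetaNat m) :=
  (ENNReal.ofReal_tsum_of_nonneg (fun k => by positivity) (summable_zetaNat hm)).symm

lemma tsum_min_le {a : ℕ → ℝ≥0∞} :
    ∑' q : ℕ × ℕ, min (a q.1) (a q.2) ≤ 2 * ∑' k : ℕ, ((k : ℝ≥0∞) + 1) * a k := by
  have h : ∀ q : ℕ × ℕ, min (a q.1) (a q.2) ≤
      (if q.2 ∈ Finset.range (q.1 + 1) then a q.1 else 0) +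
        if q.1 ∈ Finset.range (q.2 + 1) then a q.2 else 0 := fun q => by
    rcases le_total q.2 q.1 with hq | hq
    · refine le_trans (min_le_left _ _) ?_
      rw [if_pos (by simpa [Nat.lt_succ_iff] using hq)]
      exact le_self_add
    · refine le_trans (min_le_right _ _) ?_
      rw [if_pos (c := q.1 ∈ _) (by simpa [Nat.lt_succ_iff] using hq)]
      exact le_add_self
  have hrow : ∀ k : ℕ, ∑' l : ℕ, (if l ∈ Finset.range (k + 1) then a k else 0) =
      ((k : ℝ≥0∞) + 1) * a k := fun k => by
    rw [tsum_eq_sum (s := Finset.range (k + 1)) fun l hl => if_neg hl,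
      Finset.sum_congr rfl fun l hl => if_pos hl]
    simp
  calc _ ≤ ∑' q : ℕ × ℕ, _ := ENNReal.tsum_le_tsum h
    _ = _ := by
        rw [ENNReal.tsum_add, ENNReal.tsum_prod', ENNReal.tsum_prod', ENNReal.tsum_comm (f :=
          fun k l : ℕ => if k ∈ Finset.range (l + 1) then a l else 0), tsum_congr hrow, two_mul]

end Zeta

section Moments

variable {n : ℕ} {A : Set (Fin n → ℝ)}

lemma measurable_vectorCount (hA : MeasurableSet A) : Measurable (vectorCount A) :=
  measurable_pointMeasure_tupleFamily (measurableSet_fin_one hA)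

lemma measurable_multipleCount (hA : MeasurableSet A) (a b : ℝ) :
    Measurable (multipleCount A a b) :=
  measurable_pointMeasure_tupleFamily (measurableSet_multiple hA a b)

variable [NeZero n] (μ : Measure (Xn n)) [IsProbabilityMeasure μ]
  [SMulInvariantMeasure (SLR n) (Xn n) μ]

/-- Siegel's mean value formula. -/
theorem lintegral_vectorCount (hn : 2 ≤ n) (hA : MeasurableSet A) :
    ∫⁻ x, vectorCount A x ∂μ = volume A :=
  calc ∫⁻ x, vectorCount A x ∂μ = tupleIntensity 1 μ {y | y 0 ∈ A} :=
        (tupleIntensity_apply μ (measurableSet_fin_one hA)).symm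
    _ = volume A := by rw [tupleIntensity_one μ hn, volume_fin_one]

lemma lintegral_multipleCount_le (hn : 2 ≤ n) (hA : MeasurableSet A) {a b : ℝ} (ha : a ≠ 0)
    (hb : b ≠ 0) : ∫⁻ x, multipleCount A a b x ∂μ ≤
      min (ENNReal.ofReal (|a| ^ n)⁻¹) (ENNReal.ofReal (|b| ^ n)⁻¹) * volume A :=
  calc ∫⁻ x, multipleCount A a b x ∂μ = tupleIntensity 1 μ {y | a • y 0 ∈ A ∧ b • y 0 ∈ A} :=
        (tupleIntensity_apply μ (measurableSet_multiple hA a b)).symm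
    _ ≤ _ := by
        rw [tupleIntensity_one μ hn]
        exact volume_multiple_le A ha hb

/-- Rogers' second moment bound. -/
theorem lintegral_vectorCount_sq_le (hn : 3 ≤ n) (hA : MeasurableSet A) :
    ∫⁻ x, vectorCount A x ^ 2 ∂μ ≤
      volume A ^ 2 + ENNReal.ofReal (4 * zetaNat (n - 1)) * volume A := by
  let a : ℕ → ℝ≥0∞ := fun k => ENNReal.ofReal (((k : ℝ) + 1) ^ n)⁻¹
  have hpi : MeasurableSet (Set.univ.pi fun _ : Fin 2 => A) := .univ_pi fun _ => hA
  have hpair : ∫⁻ x, pointMeasure (tupleFamily n 2) x (Set.univ.pi fun _ => A) ∂μ ≤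
      volume A ^ 2 := by
    rw [← tupleIntensity_apply μ hpi]
    refine (tupleIntensity_le μ independentModLargePrimes_two (by omega) hpi).trans_eq ?_
    rw [volume_pi_pi, Fin.prod_univ_two, sq]
  have hmult : ∀ q : ℕ × ℕ × ℤˣ,
      ∫⁻ x, multipleCount A (q.1 + 1) ((q.2.2 : ℤ) * (q.2.1 + 1)) x ∂μ ≤
        min (a q.1) (a q.2.1) * volume A := fun ⟨k, l, s⟩ => by
    have hk : (k : ℝ) + 1 ≠ 0 := by positivity
    have hl : (l : ℝ) + 1 ≠ 0 := by positivity
    have hs : |((s : ℤ) : ℝ)| = 1 := by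
      rcases Int.units_eq_one_or s with rfl | rfl <;> simp
    have hs0 : ((s : ℤ) : ℝ) ≠ 0 := fun h => by simp [h] at hs
    refine (lintegral_multipleCount_le μ (by omega) hA hk (mul_ne_zero hs0 hl)).trans_eq ?_
    rw [abs_mul, hs, one_mul, abs_of_nonneg (by positivity), abs_of_nonneg (by positivity)]
  have hweight : ∀ k : ℕ, ((k : ℝ≥0∞) + 1) * a k = ENNReal.ofReal (((k : ℝ) + 1) ^ (n - 1))⁻¹ :=
    fun k => by
      obtain ⟨m, rfl⟩ : ∃ m, n = m + 1 := ⟨n - 1, by omega⟩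
      have hk : ((k : ℝ≥0∞) + 1) = ENNReal.ofReal ((k : ℝ) + 1) := by
        rw [ENNReal.ofReal_add (by positivity) zero_le_one]
        simp
      rw [hk, ← ENNReal.ofReal_mul (by positivity), Nat.add_sub_cancel, pow_succ]
      congr 1
      field_simp
  have hsum : ∑' q : ℕ × ℕ × ℤˣ, min (a q.1) (a q.2.1) ≤ ENNReal.ofReal (4 * zetaNat (n - 1)) :=
    calc ∑' q : ℕ × ℕ × ℤˣ, min (a q.1) (a q.2.1)
        = 2 * ∑' q : ℕ × ℕ, min (a q.1) (a q.2) := by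
          simp only [ENNReal.tsum_prod', tsum_fintype, Finset.sum_const, Finset.card_univ,
            Fintype.card_units_int, two_nsmul, ENNReal.tsum_add, two_mul]
      _ ≤ 2 * (2 * ENNReal.ofReal (zetaNat (n - 1))) := by
          gcongr
          refine tsum_min_le.trans_eq ?_
          rw [tsum_congr hweight, tsum_ofReal_inv_pow (by omega)]
      _ = ENNReal.ofReal (4 * zetaNat (n - 1)) := by
          rw [ENNReal.ofReal_mul (by norm_num), ← mul_assoc, ENNReal.ofReal_ofNat]
          norm_num
  calc ∫⁻ x, vectorCount A x ^ 2 ∂μ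
      ≤ ∫⁻ x, (pointMeasure (tupleFamily n 2) x (Set.univ.pi fun _ => A) + ∑' q : ℕ × ℕ × ℤˣ,
          multipleCount A (q.1 + 1) ((q.2.2 : ℤ) * (q.2.1 + 1)) x) ∂μ :=
        lintegral_mono (vectorCount_sq_le hA)
    _ ≤ volume A ^ 2 + ∑' q : ℕ × ℕ × ℤˣ, min (a q.1) (a q.2.1) * volume A := by
        rw [lintegral_add_left (measurable_pointMeasure_tupleFamily hpi),
          lintegral_tsum fun q => (measurable_multipleCount hA _ _).aemeasurable]
        exact add_le_add hpair (ENNReal.tsum_le_tsum hmult)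
    _ ≤ _ := by
        rw [ENNReal.tsum_mul_right]
        gcongr

end Moments

/-- **Random Minkowski / Rogers–Chebyshev bound.** Let `n ≥ 3`, let `μ` be a left
`SL(n,ℝ)`-invariant Borel probability measure on `X_n = SL(n,ℝ)/SL(n,ℤ)`, let `A ⊆ ℝ^n` be
measurable with `0 < |A| < ∞`, and `M > 0`. Then the measure of the set of unimodular
lattices `Λ = gℤ^n` with `|N₀(Λ, A) - |A|| > M |A|^{1/2}` (where a lattice with infinitely
many nonzero points in `A` counts as such) is at most `C_n M⁻²`, `C_n = 8 ζ(n-1)/ζ(n)`. -/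
theorem random_minkowski_chebyshev
    (n : ℕ) (hn : 3 ≤ n) (μ : Measure (Xn n)) [IsProbabilityMeasure μ]
    [SMulInvariantMeasure (SLR n) (Xn n) μ]
    (A : Set (Fin n → ℝ)) (hA : MeasurableSet A)
    (hApos : 0 < volume A) (hAfin : volume A < ⊤)
    (M : ℝ) (hM : 0 < M) :
    μ {Λ : Xn n | ∃ g : SLR n, (g : Xn n) = Λ ∧
        ((nonzeroLatticePts g A).Infinite ∨
          M * Real.sqrt (volume A).toReal <
            |((nonzeroLatticePts g A).ncard : ℝ) - (volume A).toReal|)}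
      ≤ ENNReal.ofReal (8 * zetaNat (n - 1) / zetaNat n * (M ^ 2)⁻¹) := by
  have : NeZero n := ⟨by omega⟩
  let X : Xn n → ℝ := fun x => (vectorCount A x).toReal
  set v := (volume A).toReal with hv
  have hvpos : 0 < v := ENNReal.toReal_pos hApos.ne' hAfin.ne
  have hvol : volume A = ENNReal.ofReal v := (ENNReal.ofReal_toReal hAfin.ne).symm
  have hmeas := measurable_vectorCount hA
  have hmean := lintegral_vectorCount μ (by omega) hA
  have hfinite : ∀ᵐ x ∂μ, vectorCount A x < ⊤ :=
    ae_lt_top hmeas (hmean.trans_ne hAfin.ne)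
  have hEX : ∫ x, X x ∂μ = v := by
    rw [integral_toReal hmeas.aemeasurable hfinite, hmean]
  have hz : 0 < zetaNat (n - 1) := zetaNat_pos (by omega)
  have hbound : ∫⁻ x, vectorCount A x ^ 2 ∂μ ≤
      ENNReal.ofReal (v ^ 2 + 4 * zetaNat (n - 1) * v) := by
    refine (lintegral_vectorCount_sq_le μ hn hA).trans_eq ?_
    rw [hvol, ENNReal.ofReal_add (by positivity) (by positivity), ENNReal.ofReal_pow hvpos.le,
      ENNReal.ofReal_mul (p := 4 * zetaNat (n - 1)) (by positivity)]
  have hsq : ∀ x, (vectorCount A x ^ 2).toReal = X x ^ 2 := fun x => ENNReal.toReal_pow _ _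
  have hfinite_sq : ∀ᵐ x ∂μ, vectorCount A x ^ 2 < ⊤ :=
    ae_lt_top (hmeas.pow_const 2) (hbound.trans_lt ENNReal.ofReal_lt_top).ne
  have hX : MemLp X 2 μ := by
    refine (memLp_two_iff_integrable_sq hmeas.ennreal_toReal.aestronglyMeasurable).2 ?_
    refine (integrable_toReal_of_lintegral_ne_top (hmeas.pow_const 2).aemeasurable
      (hbound.trans_lt ENNReal.ofReal_lt_top).ne).congr (ae_of_all _ hsq)
  have hEX2 : ∫ x, X x ^ 2 ∂μ ≤ v ^ 2 + 4 * zetaNat (n - 1) * v := by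
    simp_rw [← hsq]
    rw [integral_toReal (hmeas.pow_const 2).aemeasurable hfinite_sq]
    exact ENNReal.toReal_le_of_le_ofReal (by positivity) hbound
  have hvar : ProbabilityTheory.variance X μ ≤ 4 * zetaNat (n - 1) * v := by
    rw [ProbabilityTheory.variance_eq_sub hX, hEX]
    simp only [Pi.pow_apply]
    linarith
  have hsub : {Λ : Xn n | ∃ g : SLR n, (g : Xn n) = Λ ∧ ((nonzeroLatticePts g A).Infinite ∨
      M * Real.sqrt v < |((nonzeroLatticePts g A).ncard : ℝ) - v|)} ⊆
      {x | ¬vectorCount A x < ⊤} ∪ {x | M * Real.sqrt v ≤ |X x - ∫ y, X y ∂μ|} := by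
    rintro _ ⟨g, rfl, h⟩
    by_cases hfin : (nonzeroLatticePts g A).Finite
    · refine Or.inr ?_
      have hXg : X (g : Xn n) = (nonzeroLatticePts g A).ncard := by
        simp only [X]
        rw [vectorCount_mk_eq_encard hA, ← hfin.cast_ncard_eq]
        simp
      rw [Set.mem_ofPred_eq, hXg, hEX]
      exact (h.resolve_left (not_not.2 hfin)).le
    · refine Or.inl ?_
      rw [Set.mem_ofPred_eq, vectorCount_mk_eq_encard hA, Set.Infinite.encard_eq hfin]
      simp
  refine (measure_mono hsub).trans ((measure_union_le _ _).trans ?_)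
  rw [ae_iff.1 hfinite, zero_add]
  have hc : 0 < M * Real.sqrt v := mul_pos hM (Real.sqrt_pos.2 hvpos)
  refine (ProbabilityTheory.meas_ge_le_variance_div_sq hX hc).trans (ENNReal.ofReal_le_ofReal ?_)
  have hzn : 0 < zetaNat n := zetaNat_pos (by omega)
  calc ProbabilityTheory.variance X μ / (M * Real.sqrt v) ^ 2
      ≤ 4 * zetaNat (n - 1) * v / (M * Real.sqrt v) ^ 2 := by gcongr
    _ = 8 * zetaNat (n - 1) / 2 * (M ^ 2)⁻¹ := by
        rw [mul_pow, Real.sq_sqrt hvpos.le]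
        field_simp
        norm_num
    _ ≤ _ := by
        gcongr
        exact zetaNat_le_two (by omega)
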